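/- arXiv:2208.15000 — 2 statements merged into one kernel-verified Lean document; each statement's English description precedes it below -/
import Mathlib

section
/- Let A = KQ/I be a special biserial algebra over an algebraically closed field K and b a band for A such that M(b,1,1) is thin; let λ ∈ K^×, r ≥ 1, and N = M(b,λ,r). Let v and v' be two distinct strings obtained from the cyclic word b by deleting one letter. Then D(N) = cone(D(M(v)) ∪ D(M(v'))). Moreover, D(N) = D(M(v)) if and only if the preorder on the vertices traversed by b generated by the underlying quiver arrows of v coincides with the preorder generated by the underlying quiver arrows of b (i.e., v and b induce the same poset). -/
/-!
Because `M(b,1,1)` is thin, the vertices visited by `b` are pairwise distinct. Hence every arrow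
underlying `b` acts injectively on the band module `M(b,λ,r)`, every other arrow acts by zero,
and the dimension vector is constantly `r` on the set `S` of traversed vertices. The same holds
with `r = 1` for the string modules of `v` and `v'`, which traverse the same set `S`.

For any such module the stability space is `arrCone S Ar`, the set of weights of total `0` on `S`
that are non-positive on every subset closed under the set `Ar` of its arrows
(`stabSpace_eq_arrCone`): closed sets give subrepresentations, and conversely the dimension
vector of a subrepresentation is a sum of indicator functions of closed level sets. In particular
the stability space of the band module depends neither on `λ` nor on `r`.

It remains to compare `arrCone S (insert a Ar)` with `arrCone S Ar`, where `a` is the arrow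
deleted from `b` to obtain `v`. By an uncrossing argument (`arrCone_insert`) each weight of the
first cone differs from one in the second by a non-negative multiple of `e_{s(a)} - e_{t(a)}`,
and this vector lies in the cone of `v'`, since `a` still underlies a letter of `v'`. This gives
the first claim. For the second, equal preorders have the same closed sets; conversely, if the
cones agree, then testing `e_{s(a)} - e_{t(a)}` on the set of vertices below `s(a)` for `v` shows
that `t(a)` is below `s(a)` already for `v`.
-/


attribute [local instance] Classical.propDecidable

/-- A finite quiver: finite sets of vertices and arrows with source and target maps. -/
structure FinQuiver where
  V : Type
  A : Type
  [fintypeV : Fintype V]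
  [decEqV : DecidableEq V]
  [fintypeA : Fintype A]
  [decEqA : DecidableEq A]
  s : A → V
  t : A → V

attribute [instance] FinQuiver.fintypeV FinQuiver.decEqV FinQuiver.fintypeA FinQuiver.decEqA

/-- A finite-dimensional representation of a finite quiver over a field `K`. -/
structure QRep (K : Type) [Field K] (Q : FinQuiver) where
  M : Q.V → Type
  [acg : ∀ i, AddCommGroup (M i)]
  [mod : ∀ i, Module K (M i)]
  [fd : ∀ i, FiniteDimensional K (M i)]
  φ : ∀ a : Q.A, M (Q.s a) →ₗ[K] M (Q.t a)

attribute [instance] QRep.acg QRep.mod QRep.fd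

/-- A subrepresentation: a subspace at every vertex, compatible with the arrow maps. -/
structure QSubRep {K : Type} [Field K] {Q : FinQuiver} (R : QRep K Q) where
  L : ∀ i, Submodule K (R.M i)
  compat : ∀ a : Q.A, ∀ x ∈ L (Q.s a), R.φ a x ∈ L (Q.t a)

def QSubRep.le {K : Type} [Field K] {Q : FinQuiver} {R : QRep K Q} (N N' : QSubRep R) : Prop :=
  ∀ i, N.L i ≤ N'.L i

/-- The dimension vector of a representation. -/
noncomputable def QRep.dimVec {K : Type} [Field K] {Q : FinQuiver} (R : QRep K Q) (i : Q.V) : ℕ :=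
  Module.finrank K (R.M i)

/-- Standard inner product of a real vector with a dimension vector. -/
def stabInner {Q : FinQuiver} (v : Q.V → ℝ) (d : Q.V → ℕ) : ℝ :=
  ∑ i, v i * (d i : ℝ)

/-- `v`-semistability of a representation. -/
def IsSemistable {K : Type} [Field K] {Q : FinQuiver} (R : QRep K Q) (v : Q.V → ℝ) : Prop :=
  stabInner v R.dimVec = 0 ∧
    ∀ N : QSubRep R, stabInner v (fun i => Module.finrank K (N.L i)) ≤ 0

/-- The stability space of a representation. -/
def stabSpace {K : Type} [Field K] {Q : FinQuiver} (R : QRep K Q) : Set (Q.V → ℝ) :=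
  {v | IsSemistable R v}

/-- `v`-stability of a representation. -/
def IsStable {K : Type} [Field K] {Q : FinQuiver} (R : QRep K Q) (v : Q.V → ℝ) : Prop :=
  stabInner v R.dimVec = 0 ∧
    ∀ N : QSubRep R, (∃ i, N.L i ≠ ⊥) → (∃ i, N.L i ≠ ⊤) →
      stabInner v (fun i => Module.finrank K (N.L i)) < 0

/-- The thin sincere representation with identity maps: `K` at every vertex. -/
noncomputable def thinRep (K : Type) [Field K] (Q : FinQuiver) : QRep K Q where
  M _ := K
  φ _ := LinearMap.id

/-- The set of all finite non-negative real linear combinations of elements of `X`. -/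
def coneSpan {E : Type} [AddCommMonoid E] [Module ℝ E] (X : Set E) : Set E :=
  {x | ∃ (n : ℕ) (c : Fin n → ℝ) (f : Fin n → E),
    (∀ j, 0 ≤ c j) ∧ (∀ j, f j ∈ X) ∧ x = ∑ j, c j • f j}

/-- The standard basis vector of `ℝ^{Q₀}` at a vertex. -/
noncomputable def eVec (Q : FinQuiver) (i : Q.V) : Q.V → ℝ := Pi.single i 1

/-- A subrepresentation viewed as a representation in its own right. -/
noncomputable def QSubRep.toRep {K : Type} [Field K] {Q : FinQuiver} {R : QRep K Q}
    (N : QSubRep R) : QRep K Q where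
  M i := ↥(N.L i)
  φ a := (R.φ a).restrict (fun x hx => N.compat a x hx)

/-- The quotient of a representation by a subrepresentation. -/
noncomputable def QRep.quotBy {K : Type} [Field K] {Q : FinQuiver} (R : QRep K Q)
    (N : QSubRep R) : QRep K Q where
  M i := R.M i ⧸ N.L i
  φ a := Submodule.mapQ _ _ (R.φ a) (fun x hx => N.compat a x hx)

/-- The quotient `N'/N` of nested subrepresentations, as a representation. -/
noncomputable def quotRep {K : Type} [Field K] {Q : FinQuiver} (R : QRep K Q)
    (N N' : QSubRep R) (h : QSubRep.le N N') : QRep K Q where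
  M i := ↥(N'.L i) ⧸ Submodule.comap (N'.L i).subtype (N.L i)
  φ a := Submodule.mapQ _ _ ((R.φ a).restrict (fun x hx => N'.compat a x hx))
    (by
      intro x hx
      simp only [Submodule.mem_comap, Submodule.subtype_apply,
        LinearMap.restrict_apply] at hx ⊢
      exact N.compat a _ hx)

/-- A representation is nonzero if some vertex space is nonzero. -/
def QRep.Nonzero {K : Type} [Field K] {Q : FinQuiver} (R : QRep K Q) : Prop :=
  ∃ i, Module.finrank K (R.M i) ≠ 0

/-- Indecomposability: nonzero and admitting no internal direct sum decomposition into two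
nonzero subrepresentations. -/
def Indecomposable {K : Type} [Field K] {Q : FinQuiver} (R : QRep K Q) : Prop :=
  R.Nonzero ∧
    ¬∃ U W : QSubRep R, (∃ i, U.L i ≠ ⊥) ∧ (∃ i, W.L i ≠ ⊥) ∧
      (∀ i, U.L i ⊓ W.L i = ⊥) ∧ (∀ i, U.L i ⊔ W.L i = ⊤)

/-- Isomorphism of representations. -/
def RepIso {K : Type} [Field K] {Q : FinQuiver} (R R' : QRep K Q) : Prop :=
  ∃ f : ∀ i, R.M i ≃ₗ[K] R'.M i,
    ∀ (a : Q.A) (x : R.M (Q.s a)), f (Q.t a) (R.φ a x) = R'.φ a (f (Q.s a) x)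

/-- The support of a representation. -/
def QRep.supp {K : Type} [Field K] {Q : FinQuiver} (R : QRep K Q) : Set Q.V :=
  {i | Module.finrank K (R.M i) ≠ 0}

/-- The stability space restricted to the coordinate subspace of the support. -/
def Dsupp {K : Type} [Field K] {Q : FinQuiver} (R : QRep K Q) : Set (Q.V → ℝ) :=
  stabSpace R ∩ {v | ∀ i, i ∉ R.supp → v i = 0}

/-- Standard inner product on `ℝ^V`. -/
def rInner {V : Type} [Fintype V] (a v : V → ℝ) : ℝ := ∑ i, a i * v i

/-- A face of a polyhedral cone. -/
def IsFace {V : Type} [Fintype V] (C F : Set (V → ℝ)) : Prop :=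
  ∃ a : V → ℝ, (∀ v ∈ C, rInner a v ≤ 0) ∧ F = C ∩ {v | rInner a v = 0}

/-- The dimension of the linear span of a subset of `ℝ^V`. -/
noncomputable def coneDim {V : Type} [Fintype V] (F : Set (V → ℝ)) : ℕ :=
  Module.finrank ℝ ↥(Submodule.span ℝ F)

/-- A facet: a face of codimension one. -/
def IsFacet {V : Type} [Fintype V] (C F : Set (V → ℝ)) : Prop :=
  IsFace C F ∧ coneDim F + 1 = coneDim C

/-- Composability of a list of arrows (a directed path). -/
def PathComposable {Q : FinQuiver} : List Q.A → Prop
  | [] => True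
  | [_] => True
  | a :: b :: l => Q.t a = Q.s b ∧ PathComposable (b :: l)

/-- Letters: direct arrows (`inl`) and formal inverses of arrows (`inr`). -/
abbrev Letter (Q : FinQuiver) := Q.A ⊕ Q.A

/-- Source of a letter. -/
def lsrc {Q : FinQuiver} : Letter Q → Q.V
  | Sum.inl a => Q.s a
  | Sum.inr a => Q.t a

/-- Target of a letter. -/
def ltgt {Q : FinQuiver} : Letter Q → Q.V
  | Sum.inl a => Q.t a
  | Sum.inr a => Q.s a

/-- The formal inverse of a letter. -/
def linv {Q : FinQuiver} : Letter Q → Letter Q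
  | Sum.inl a => Sum.inr a
  | Sum.inr a => Sum.inl a

/-- The underlying quiver arrow of a letter. -/
def und {Q : FinQuiver} : Letter Q → Q.A
  | Sum.inl a => a
  | Sum.inr a => a

/-- A letter is direct if it is an arrow (not a formal inverse). -/
def isDir {Q : FinQuiver} (c : Letter Q) : Prop := c.isLeft = true

/-- Composability of a word of letters. -/
def WordComposable {Q : FinQuiver} : List (Letter Q) → Prop
  | [] => True
  | [_] => True
  | c :: d :: l => ltgt c = lsrc d ∧ WordComposable (d :: l)

/-- Reducedness of a word: no letter is followed by its own inverse. -/
def WordReduced {Q : FinQuiver} : List (Letter Q) → Prop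
  | [] => True
  | [_] => True
  | c :: d :: l => d ≠ linv c ∧ WordReduced (d :: l)

/-- A bound quiver: a set of (monomial) relations generating an admissible ideal. -/
structure BoundQuiver (Q : FinQuiver) where
  rel : List Q.A → Prop
  adm_comp : ∀ u, rel u → PathComposable u ∧ 2 ≤ u.length
  adm_bound : ∃ N : ℕ, ∀ u : List Q.A, PathComposable u → N ≤ u.length →
    ∃ u', rel u' ∧ u' <:+: u

/-- The special biserial conditions on a bound quiver algebra. -/
def SpecialBiserial {Q : FinQuiver} (D : BoundQuiver Q) : Prop :=
  (∀ v : Q.V, Set.ncard {a : Q.A | Q.s a = v} ≤ 2) ∧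
  (∀ v : Q.V, Set.ncard {a : Q.A | Q.t a = v} ≤ 2) ∧
  (∀ a c d : Q.A, Q.t a = Q.s c → Q.t a = Q.s d → c ≠ d → D.rel [a, c] ∨ D.rel [a, d]) ∧
  (∀ a b c : Q.A, Q.t a = Q.s c → Q.t b = Q.s c → a ≠ b → D.rel [a, c] ∨ D.rel [b, c])

/-- A string: a nonempty composable reduced word such that no subword of it or of its
inverse lies in the ideal. -/
structure IsString {Q : FinQuiver} (D : BoundQuiver Q) (w : List (Letter Q)) : Prop where
  ne : w ≠ []
  comp : WordComposable w
  red : WordReduced w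
  avoid : ∀ u : List Q.A, u.map Sum.inl <:+: w → ¬D.rel u
  avoid_inv : ∀ u : List Q.A, (u.map Sum.inr).reverse <:+: w → ¬D.rel u

/-- The `k`-fold concatenation of a word with itself. -/
def listPow {α : Type} (u : List α) : ℕ → List α
  | 0 => []
  | n + 1 => u ++ listPow u n

/-- A band: a cyclic word all of whose powers are strings, which is not itself a proper
power of a shorter word. -/
def IsBand {Q : FinQuiver} (D : BoundQuiver Q) (b : List (Letter Q)) : Prop :=
  b ≠ [] ∧ (∀ m : ℕ, 1 ≤ m → IsString D (listPow b m)) ∧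
    ∀ (u : List (Letter Q)) (k : ℕ), 2 ≤ k → b ≠ listPow u k

/-- The `j`-th vertex visited by a (nonempty) walk `w`. -/
def wVtx {Q : FinQuiver} (w : List (Letter Q)) (hw : w ≠ []) (j : ℕ) : Q.V :=
  if j = 0 then lsrc (w.head hw) else ltgt (w.getD (j - 1) (w.head hw))

/-- The basis vector at position `j` is sent to the one at position `k` by the arrow `a`. -/
def stepsTo {Q : FinQuiver} (w : List (Letter Q)) (a : Q.A) (j k : ℕ) : Prop :=
  (k = j + 1 ∧ w[j]? = some (Sum.inl a)) ∨ (j = k + 1 ∧ w[k]? = some (Sum.inr a))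

/-- The string module `M(w)` of a nonempty walk `w`, with one standard basis vector for each
vertex visit, direct letters acting forwards and inverse letters acting backwards. -/
noncomputable def stringRep (K : Type) [Field K] (Q : FinQuiver) (w : List (Letter Q))
    (hw : w ≠ []) : QRep K Q where
  M i := ({j : Fin (w.length + 1) // wVtx w hw j = i} → K)
  φ a := Matrix.mulVecLin
    (fun (p : {j : Fin (w.length + 1) // wVtx w hw (j : ℕ) = Q.t a})
         (q : {j : Fin (w.length + 1) // wVtx w hw (j : ℕ) = Q.s a}) =>
      if stepsTo w a (q.1 : ℕ) (p.1 : ℕ) then (1 : K) else 0)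

/-- The vertex `v_j` traversed by a cyclic word (indices mod the length). -/
def bVtx {Q : FinQuiver} (b : List (Letter Q)) (hb : b ≠ []) (j : ℕ) : Q.V :=
  lsrc (b.getD (j % b.length) (b.head hb))

/-- The `j`-th letter of a cyclic word (indices mod the length). -/
def bLett {Q : FinQuiver} (b : List (Letter Q)) (hb : b ≠ []) (j : ℕ) : Letter Q :=
  b.getD (j % b.length) (b.head hb)

/-- Entry of the Jordan block of size `m` with eigenvalue `lam`. -/
noncomputable def jordEntry {K : Type} [Field K] (lam : K) {m : ℕ} (κ μ : Fin m) : K :=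
  if κ = μ then lam else if (μ : ℕ) + 1 = (κ : ℕ) then 1 else 0

/-- The matrix entry of the action of the arrow `a` on a band module, from the basis vector
`z_j^μ` to the basis vector `z_k^κ`: all letters act by identity matrices except the last
one, which acts by the Jordan block with eigenvalue `lam`. -/
noncomputable def bandEntry {Q : FinQuiver} (K : Type) [Field K] (b : List (Letter Q))
    (hb : b ≠ []) (lam : K) {m : ℕ} (a : Q.A) (k j : ℕ) (κ μ : Fin m) : K :=
  (if bLett b hb j = Sum.inl a ∧ (j + 1) % b.length = k % b.length then
    (if j % b.length + 1 = b.length then jordEntry lam κ μ else if κ = μ then 1 else 0)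
   else 0)
  + (if bLett b hb k = Sum.inr a ∧ (k + 1) % b.length = j % b.length then
    (if k % b.length + 1 = b.length then jordEntry lam κ μ else if κ = μ then 1 else 0)
   else 0)

/-- The band module `M(b, lam, m)`. -/
noncomputable def bandRep (K : Type) [Field K] (Q : FinQuiver) (b : List (Letter Q))
    (hb : b ≠ []) (lam : K) (m : ℕ) : QRep K Q where
  M i := (({j : Fin b.length // bVtx b hb j = i} × Fin m) → K)
  φ a := Matrix.mulVecLin
    (fun (p : {j : Fin b.length // bVtx b hb (j : ℕ) = Q.t a} × Fin m)
         (q : {j : Fin b.length // bVtx b hb (j : ℕ) = Q.s a} × Fin m) =>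
      bandEntry K b hb lam a (p.1.1 : ℕ) (q.1.1 : ℕ) p.2 q.2)

/-- The quiver `Q_w` having the same shape as the walk `w`. -/
@[reducible] def stringQuiver (Q : FinQuiver) (w : List (Letter Q)) : FinQuiver where
  V := Fin (w.length + 1)
  A := Fin w.length
  s j := match w.get j with
    | Sum.inl _ => j.castSucc
    | Sum.inr _ => j.succ
  t j := match w.get j with
    | Sum.inl _ => j.succ
    | Sum.inr _ => j.castSucc

/-- Cyclic successor in `Fin n`. -/
def cycSucc {n : ℕ} (j : Fin n) : Fin n := ⟨((j : ℕ) + 1) % n, Nat.mod_lt _ j.pos⟩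

/-- The cyclic quiver `Q_b` having the same shape as the cyclic word `b`. -/
@[reducible] def bandQuiver (Q : FinQuiver) (b : List (Letter Q)) : FinQuiver where
  V := Fin b.length
  A := Fin b.length
  s j := match b.get j with
    | Sum.inl _ => j
    | Sum.inr _ => cycSucc j
  t j := match b.get j with
    | Sum.inl _ => cycSucc j
    | Sum.inr _ => j

/-- A ray vector of a cone. -/
def IsRay {E : Type} [AddCommMonoid E] [Module ℝ E] (C : Set E) (u : E) : Prop :=
  u ∈ C ∧ u ≠ 0 ∧ ∀ x ∈ C, ∀ y ∈ C, u = x + y →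
    (∃ c : ℝ, 0 ≤ c ∧ x = c • u) ∧ ∃ c : ℝ, 0 ≤ c ∧ y = c • u

/-- A minimal admissible sum: a nonzero non-negative combination of elements of `S` lying in
the subspace `Rsub`, such that no nonzero non-negative combination supported on a proper
subset of its support lies in `Rsub`. -/
def IsMinAdmissibleSum {E : Type} [AddCommGroup E] [Module ℝ E] (Rsub : Set E)
    (S : Finset E) (x : E) : Prop :=
  ∃ lam : E → ℝ, (∀ s ∈ S, 0 ≤ lam s) ∧ x = ∑ s ∈ S, lam s • s ∧ x ∈ Rsub ∧ x ≠ 0 ∧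
    ¬∃ mu : E → ℝ, (∀ s ∈ S, 0 ≤ mu s) ∧
      {s ∈ S | mu s ≠ 0} ⊂ {s ∈ S | lam s ≠ 0} ∧
      (∑ s ∈ S, mu s • s) ∈ Rsub ∧ (∑ s ∈ S, mu s • s) ≠ 0

/-- The preorder induced by a walk `u` on the vertices: generated by `t(α) ≤ s(α)` over the
underlying arrows `α` of the letters of `u`. -/
def wordRel {Q : FinQuiver} (u : List (Letter Q)) : Q.V → Q.V → Prop :=
  Relation.ReflTransGen (fun x y => ∃ c ∈ u, Q.t (und c) = x ∧ Q.s (und c) = y)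

/-- `v` is obtained from the cyclic word `b` by deleting one letter. -/
def DeleteOne {Q : FinQuiver} (b v : List (Letter Q)) : Prop :=
  ∃ (l₁ l₂ : List (Letter Q)) (c : Letter Q), b = l₁ ++ c :: l₂ ∧ v = l₂ ++ l₁

/-- The generating vector of the stability space of a thin band module attached to the
`i`-th letter: `e_{v_i} - e_{v_{i+1}}` for a direct letter and its negative otherwise. -/
noncomputable def sVec {Q : FinQuiver} (b : List (Letter Q)) (hb : b ≠ []) (i : ℕ) :
    Q.V → ℝ :=
  if isDir (bLett b hb i) then
    Pi.single (bVtx b hb i) 1 - Pi.single (bVtx b hb (i + 1)) 1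
  else Pi.single (bVtx b hb (i + 1)) 1 - Pi.single (bVtx b hb i) 1

/-- The set `S = {s_1, …, s_n}` of generating vectors. -/
def Sset {Q : FinQuiver} (b : List (Letter Q)) (hb : b ≠ []) : Set (Q.V → ℝ) :=
  {u | ∃ i < b.length, u = sVec b hb i}

/-- The `g`-vector of the thin band module: the sum of the `s_i` over direct letters. -/
noncomputable def gVec {Q : FinQuiver} (b : List (Letter Q)) (hb : b ≠ []) : Q.V → ℝ :=
  ∑ i ∈ Finset.range b.length, if isDir (bLett b hb i) then sVec b hb i else 0

/-- The coefficient `ε_i` (for the mathematical index `i`, with letters `α_{i-1}`, `α_i`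
at 0-based positions `i-2`, `i-1`). -/
noncomputable def epsCoef {Q : FinQuiver} (b : List (Letter Q)) (hb : b ≠ []) (i : ℕ) : ℝ :=
  if ¬isDir (bLett b hb (i - 2)) ∧ isDir (bLett b hb (i - 1)) then 1
  else if isDir (bLett b hb (i - 2)) ∧ ¬isDir (bLett b hb (i - 1)) then -1
  else 0

/-- The vector `g_w` for `w = α_1 ⋯ α_m` (the `g`-vector of `M(w)`). -/
noncomputable def gwVec {Q : FinQuiver} (b : List (Letter Q)) (hb : b ≠ []) (m : ℕ) :
    Q.V → ℝ :=
  (if isDir (bLett b hb 0) then Pi.single (bVtx b hb 0) (1 : ℝ) else 0)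
  + (if 1 ≤ m ∧ ¬isDir (bLett b hb (m - 1)) then Pi.single (bVtx b hb m) (1 : ℝ) else 0)
  + (if 1 ≤ m ∧ isDir (bLett b hb m) then -Pi.single (bVtx b hb (m + 1)) (1 : ℝ) else 0)
  + (if isDir (bLett b hb (b.length - 1)) then -Pi.single (bVtx b hb (b.length - 1)) (1 : ℝ)
     else 0)
  + ∑ i ∈ Finset.Icc 2 m, epsCoef b hb i • (Pi.single (bVtx b hb (i - 1)) (1 : ℝ) : Q.V → ℝ)

/-- The vector `g_w'` for `w = α_1 ⋯ α_m` (equal to `-g^{M(w)ᵒᵖ}`). -/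
noncomputable def gwVec' {Q : FinQuiver} (b : List (Letter Q)) (hb : b ≠ []) (m : ℕ) :
    Q.V → ℝ :=
  (if ¬isDir (bLett b hb 0) then -Pi.single (bVtx b hb 0) (1 : ℝ) else 0)
  + (if 1 ≤ m ∧ isDir (bLett b hb (m - 1)) then -Pi.single (bVtx b hb m) (1 : ℝ) else 0)
  + (if 1 ≤ m ∧ ¬isDir (bLett b hb m) then Pi.single (bVtx b hb (m + 1)) (1 : ℝ) else 0)
  + (if ¬isDir (bLett b hb (b.length - 1)) then Pi.single (bVtx b hb (b.length - 1)) (1 : ℝ)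
     else 0)
  + ∑ i ∈ Finset.Icc 2 m, epsCoef b hb i • (Pi.single (bVtx b hb (i - 1)) (1 : ℝ) : Q.V → ℝ)


/-! ### Cones of weights and closed sets of vertices -/

/-- The total weight of `θ` on the set `X`. -/
noncomputable def wt {V : Type} [Fintype V] (θ : V → ℝ) (X : Set V) : ℝ :=
  ∑ i, X.indicator θ i

/-- `X` is closed under the arrows in `Ar`: the support of a subrepresentation when the arrows
in `Ar` act injectively and all others by zero. -/
def ArrClosed {Q : FinQuiver} (Ar : Set Q.A) (X : Set Q.V) : Prop :=
  ∀ a ∈ Ar, Q.s a ∈ X → Q.t a ∈ X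

/-- The cone of weights with total `0` on `S` and non-positive weight on the trace on `S` of
every `Ar`-closed set of vertices. -/
def arrCone {Q : FinQuiver} (S : Set Q.V) (Ar : Set Q.A) : Set (Q.V → ℝ) :=
  {θ | wt θ S = 0 ∧ ∀ X, ArrClosed Ar X → wt θ (S ∩ X) ≤ 0}

lemma wt_add {V : Type} [Fintype V] (θ η : V → ℝ) (X : Set V) :
    wt (θ + η) X = wt θ X + wt η X := by
  simp [wt, Set.indicator_add', Finset.sum_add_distrib]

lemma wt_smul {V : Type} [Fintype V] (c : ℝ) (θ : V → ℝ) (X : Set V) :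
    wt (c • θ) X = c * wt θ X := by
  simp only [wt, Finset.mul_sum]
  refine Finset.sum_congr rfl fun i _ => ?_
  by_cases h : i ∈ X <;> simp [h]

lemma wt_union_add_inter {V : Type} [Fintype V] (θ : V → ℝ) (X Y : Set V) :
    wt θ (X ∪ Y) + wt θ (X ∩ Y) = wt θ X + wt θ Y := by
  simp only [wt, ← Finset.sum_add_distrib]
  refine Finset.sum_congr rfl fun i _ => ?_
  exact congrFun (Set.indicator_union_add_inter θ X Y) i

lemma wt_single {V : Type} [Fintype V] [DecidableEq V] (j : V) (X : Set V) :
    wt (Pi.single j (1 : ℝ)) X = X.indicator 1 j := by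
  unfold wt
  rw [Finset.sum_eq_single j]
  · by_cases h : j ∈ X <;> simp [h]
  · intro i _ hij
    by_cases h : i ∈ X <;> simp [h, hij]
  · simp

/-- The generator `e_{s(a)} - e_{t(a)}` attached to an arrow. -/
noncomputable def arrVec {Q : FinQuiver} (a : Q.A) : Q.V → ℝ :=
  Pi.single (Q.s a) 1 + (-1 : ℝ) • Pi.single (Q.t a) 1

lemma wt_arrVec {Q : FinQuiver} (a : Q.A) (X : Set Q.V) :
    wt (arrVec a) X = X.indicator 1 (Q.s a) - X.indicator 1 (Q.t a) := by
  rw [arrVec, wt_add, wt_smul, wt_single, wt_single]; ring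

lemma arrVec_mem {Q : FinQuiver} {S : Set Q.V} {Ar : Set Q.A} {a : Q.A} (ha : a ∈ Ar)
    (hs : Q.s a ∈ S) (ht : Q.t a ∈ S) : arrVec a ∈ arrCone S Ar := by
  refine ⟨by simp [wt_arrVec, hs, ht], fun X hX => ?_⟩
  have := hX a ha
  rw [wt_arrVec]
  by_cases h1 : Q.s a ∈ X
  · simp [h1, this h1, hs, ht]
  · by_cases h2 : Q.t a ∈ X <;> simp [h1, h2, hs, ht]

lemma arrCone_anti {Q : FinQuiver} {S : Set Q.V} {Ar Br : Set Q.A} (h : Ar ⊆ Br) :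
    arrCone S Ar ⊆ arrCone S Br :=
  fun _ hθ => ⟨hθ.1, fun X hX => hθ.2 X fun a ha => hX a (h ha)⟩

lemma arrCone_comb {Q : FinQuiver} {S : Set Q.V} {Ar : Set Q.A} (n : ℕ) (c : Fin n → ℝ)
    (f : Fin n → Q.V → ℝ) (hc : ∀ j, 0 ≤ c j) (hf : ∀ j, f j ∈ arrCone S Ar) :
    ∑ j, c j • f j ∈ arrCone S Ar := by
  refine Finset.sum_induction _ (· ∈ arrCone S Ar) ?_ ?_ ?_
  · rintro x y hx hy
    refine ⟨by rw [wt_add, hx.1, hy.1, add_zero], fun X hX => ?_⟩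
    rw [wt_add]
    exact add_nonpos (hx.2 X hX) (hy.2 X hX)
  · refine ⟨by simp [wt], fun X _ => by simp [wt]⟩
  · intro j _
    refine ⟨by rw [wt_smul, (hf j).1, mul_zero], fun X hX => ?_⟩
    rw [wt_smul]
    exact mul_nonpos_of_nonneg_of_nonpos (hc j) ((hf j).2 X hX)

/-- Removing one arrow `a`: a weight in the larger cone is a weight in the smaller one plus a
non-negative multiple of `e_{s(a)} - e_{t(a)}`. The multiple is the largest weight of an
`Ar`-closed set; it works because closed sets form a lattice on which the weight is modular. -/
lemma arrCone_insert {Q : FinQuiver} {S : Set Q.V} {Ar : Set Q.A} {a : Q.A}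
    (hs : Q.s a ∈ S) (ht : Q.t a ∈ S) {θ : Q.V → ℝ} (hθ : θ ∈ arrCone S (insert a Ar)) :
    ∃ c : ℝ, 0 ≤ c ∧ ∃ η ∈ arrCone S Ar, θ = η + c • arrVec a := by
  obtain ⟨Y, hY, hmax⟩ := Set.exists_max_image {X : Set Q.V | ArrClosed Ar X}
    (fun X => wt θ (S ∩ X)) (Set.toFinite _) ⟨∅, fun _ _ h => h.elim⟩
  have hmem : ∀ X, ArrClosed Ar X → (Q.s a ∈ X → Q.t a ∈ X) → wt θ (S ∩ X) ≤ 0 := by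
    intro X hX h
    refine hθ.2 X ?_
    rintro x (rfl | hx)
    · exact h
    · exact hX x hx
  have h0 : 0 ≤ wt θ (S ∩ Y) := by
    have := hmax ∅ (fun _ _ h => h.elim)
    simpa [wt] using this
  refine ⟨wt θ (S ∩ Y), h0, θ + (-wt θ (S ∩ Y)) • arrVec a, ⟨?_, fun X hX => ?_⟩, ?_⟩
  · rw [wt_add, wt_smul, hθ.1, wt_arrVec]
    simp [hs, ht]
  · rw [wt_add, wt_smul, wt_arrVec]
    have hXY := hmax X hX
    by_cases h1 : Q.s a ∈ X <;> by_cases h2 : Q.t a ∈ X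
    · have := hmem X hX (fun _ => h2)
      simpa [h1, h2, hs, ht] using this
    · simpa [h1, h2, hs, ht] using hXY
    · suffices wt θ (S ∩ X) + wt θ (S ∩ Y) ≤ 0 by simpa [h1, h2, hs, ht] using this
      by_cases h3 : Q.s a ∈ Y → Q.t a ∈ Y
      · exact add_nonpos (hmem X hX fun _ => h2) (hmem Y hY h3)
      · push Not at h3
        have hu := hmem (X ∪ Y) (fun x hx h => h.imp (hX x hx) (hY x hx)) (fun _ => Or.inl h2)
        have hi := hmem (X ∩ Y) (fun x hx h => ⟨hX x hx h.1, hY x hx h.2⟩)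
          (fun h => absurd h.1 h1)
        rw [Set.inter_union_distrib_left] at hu
        rw [Set.inter_inter_distrib_left] at hi
        rw [← wt_union_add_inter]
        exact add_nonpos hu hi
    · have := hmem X hX (fun h => absurd h h1)
      simpa [h1, h2, hs, ht] using this
  · rw [add_assoc, ← add_smul, neg_add_cancel, zero_smul, add_zero]

/-! ### Stability spaces of modules of constant dimension -/

/-- Stability space of a representation of constant dimension `r` on `S` whose arrows act
injectively or by zero. A subrepresentation `L` is handled by slicing its dimension vector into
the closed level sets `{i | k < dim L i}`. -/
lemma stabSpace_eq_arrCone {K : Type} [Field K] {Q : FinQuiver} (R : QRep K Q) (S : Set Q.V)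
    (Ar : Set Q.A) (r : ℕ) (hr : 1 ≤ r) (hS : ∀ i ∈ S, Module.finrank K (R.M i) = r)
    (hS' : ∀ i ∉ S, Module.finrank K (R.M i) = 0)
    (hinj : ∀ a ∈ Ar, Function.Injective (R.φ a)) (hzero : ∀ a ∉ Ar, R.φ a = 0) :
    stabSpace R = arrCone S Ar := by
  have hr' : (0 : ℝ) < r := by exact_mod_cast hr
  have htot : ∀ θ : Q.V → ℝ, stabInner θ R.dimVec = r * wt θ S := by
    intro θ
    simp only [stabInner, wt, Finset.mul_sum, QRep.dimVec]
    refine Finset.sum_congr rfl fun i _ => ?_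
    by_cases h : i ∈ S
    · simp [h, hS i h, mul_comm]
    · simp [h, hS' i h]
  have hle : ∀ (N : QSubRep R) i, Module.finrank K (N.L i) ≤ Module.finrank K (R.M i) :=
    fun N i => Submodule.finrank_le _
  ext θ
  constructor
  · rintro ⟨h1, h2⟩
    refine ⟨?_, fun X hX => ?_⟩
    · rw [htot] at h1
      exact (mul_eq_zero.1 h1).resolve_left hr'.ne'
    · have := h2 ⟨fun i => if i ∈ X then ⊤ else ⊥, fun a x hx => by
        by_cases ha : a ∈ Ar
        · by_cases hs : Q.s a ∈ X
          · simp [hX a ha hs]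
          · rw [if_neg hs, Submodule.mem_bot] at hx
            rw [hx, map_zero]; exact Submodule.zero_mem _
        · rw [hzero a ha]; exact Submodule.zero_mem _⟩
      have e : stabInner θ (fun i => Module.finrank K
          ((if i ∈ X then ⊤ else ⊥ : Submodule K (R.M i)))) = r * wt θ (S ∩ X) := by
        simp only [stabInner, wt, Finset.mul_sum]
        refine Finset.sum_congr rfl fun i _ => ?_
        by_cases hx : i ∈ X
        · rw [show (if i ∈ X then ⊤ else ⊥ : Submodule K (R.M i)) = ⊤ from if_pos hx,
            finrank_top]
          by_cases h : i ∈ S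
          · simp [h, hS i h, mul_comm, hx]
          · simp [h, hS' i h]
        · simp [hx]
      rw [e] at this
      exact nonpos_of_mul_nonpos_right this hr'
  · rintro ⟨h1, h2⟩
    refine ⟨by rw [htot, h1, mul_zero], fun N => ?_⟩
    have key : stabInner θ (fun i => Module.finrank K (N.L i)) =
        ∑ k ∈ Finset.range r, wt θ (S ∩ {i | k < Module.finrank K (N.L i)}) := by
      simp only [stabInner, wt]
      rw [Finset.sum_comm]
      refine Finset.sum_congr rfl fun i _ => ?_
      have hi := hle N i
      by_cases h : i ∈ S
      · rw [hS i h] at hi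
        have : ∀ k, (S ∩ {i | k < Module.finrank K (N.L i)}).indicator θ i =
            if k < Module.finrank K (N.L i) then θ i else 0 := by
          intro k
          by_cases hk : k < Module.finrank K (N.L i) <;> simp [h, hk]
        rw [Finset.sum_congr rfl fun k _ => this k, ← Finset.sum_filter, Finset.sum_const,
          nsmul_eq_mul, mul_comm]
        congr 2
        have : Finset.filter (fun k => k < Module.finrank K (N.L i)) (Finset.range r)
            = Finset.range (Module.finrank K (N.L i)) := by
          ext k; simp only [Finset.mem_filter, Finset.mem_range]; omega
        rw [this, Finset.card_range]
      · rw [hS' i h, Nat.le_zero] at hi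
        simp [h, hi]
    rw [key]
    refine Finset.sum_nonpos fun k _ => h2 _ fun a ha hk => ?_
    refine lt_of_lt_of_le (Set.mem_ofPred.1 hk) ?_
    have hm : (N.L (Q.s a)).map (R.φ a) ≤ N.L (Q.t a) := by
      rintro _ ⟨x, hx, rfl⟩
      exact N.compat a x hx
    rw [(Submodule.equivMapOfInjective (R.φ a) (hinj a ha) (N.L (Q.s a))).finrank_eq]
    exact Submodule.finrank_mono hm

/-! ### Letters and vertices of a band -/

lemma wordComposable_getElem {Q : FinQuiver} : ∀ (w : List (Letter Q)), WordComposable w →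
    ∀ i (h : i + 1 < w.length), ltgt w[i] = lsrc w[i + 1]
  | [], _, _, h => by simp at h
  | [_], _, _, h => by simp at h
  | c :: d :: l, hw, i, h => by
    cases i with
    | zero => exact hw.1
    | succ i => exact wordComposable_getElem (d :: l) hw.2 i (by simpa using h)

lemma wordReduced_getElem {Q : FinQuiver} : ∀ (w : List (Letter Q)), WordReduced w →
    ∀ i (h : i + 1 < w.length), w[i + 1] ≠ linv w[i]
  | [], _, _, h => by simp at h
  | [_], _, _, h => by simp at h
  | c :: d :: l, hw, i, h => by
    cases i with
    | zero => exact hw.1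
    | succ i => exact wordReduced_getElem (d :: l) hw.2 i (by simpa using h)

section band

variable {Q : FinQuiver} {b : List (Letter Q)}

lemma bLett_eq (hb : b ≠ []) (j : ℕ) :
    bLett b hb j = b[j % b.length]'(Nat.mod_lt _ (List.length_pos_iff.2 hb)) := by
  rw [bLett, List.getD_eq_getElem]

lemma bLett_congr (hb : b ≠ []) {j k : ℕ} (h : j % b.length = k % b.length) :
    bLett b hb j = bLett b hb k := by
  unfold bLett; rw [h]

lemma bVtx_congr (hb : b ≠ []) {j k : ℕ} (h : j % b.length = k % b.length) :
    bVtx b hb j = bVtx b hb k := by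
  unfold bVtx; rw [h]

lemma bVtx_eq (hb : b ≠ []) (j : ℕ) : bVtx b hb j = lsrc (bLett b hb j) := rfl

lemma listPow_two_getElem (hb : b ≠ []) (i : ℕ) (h : i < (listPow b 2).length) :
    (listPow b 2)[i] = bLett b hb i := by
  have h' : i < b.length + b.length := by simpa [listPow] using h
  rw [bLett_eq]
  simp only [listPow, List.append_nil, List.getElem_append]
  split_ifs with hi
  · simp [Nat.mod_eq_of_lt hi]
  · have : i % b.length = i - b.length := by
      rw [Nat.mod_eq_sub_mod (not_lt.1 hi), Nat.mod_eq_of_lt (by omega)]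
    simp [this]

lemma band_comp {D : BoundQuiver Q} (hb : IsBand D b) (j : ℕ) :
    bVtx b hb.1 (j + 1) = ltgt (bLett b hb.1 j) := by
  have hpos := List.length_pos_iff.2 hb.1
  have hl : (listPow b 2).length = b.length + b.length := by simp [listPow]
  have hj := Nat.mod_lt j hpos
  have := wordComposable_getElem _ (hb.2.1 2 (by norm_num)).comp (j % b.length) (by omega)
  rw [listPow_two_getElem hb.1, listPow_two_getElem hb.1] at this
  rw [bLett_congr hb.1 (Nat.mod_mod j b.length)] at this
  rw [this]
  exact bVtx_congr hb.1 (by simp)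

lemma band_red {D : BoundQuiver Q} (hb : IsBand D b) (j : ℕ) :
    bLett b hb.1 (j + 1) ≠ linv (bLett b hb.1 j) := by
  have hpos := List.length_pos_iff.2 hb.1
  have hl : (listPow b 2).length = b.length + b.length := by simp [listPow]
  have hj := Nat.mod_lt j hpos
  have := wordReduced_getElem _ (hb.2.1 2 (by norm_num)).red (j % b.length) (by omega)
  rw [listPow_two_getElem hb.1, listPow_two_getElem hb.1] at this
  rw [bLett_congr hb.1 (Nat.mod_mod j b.length)] at this
  rwa [bLett_congr hb.1 (show (j + 1) % b.length = (j % b.length + 1) % b.length by simp)]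

lemma finrank_bandRep (K : Type) [Field K] (hb : b ≠ []) (lam : K) (r : ℕ) (i : Q.V) :
    Module.finrank K ((bandRep K Q b hb lam r).M i) =
      Fintype.card {j : Fin b.length // bVtx b hb j = i} * r := by
  change Module.finrank K (({j : Fin b.length // bVtx b hb j = i} × Fin r) → K) = _
  rw [Module.finrank_fintype_fun_eq_card, Fintype.card_prod, Fintype.card_fin]

lemma band_vtx_inj {K : Type} [Field K] (hb : b ≠ [])
    (hthin : ∀ i, Module.finrank K ((bandRep K Q b hb (1 : K) 1).M i) ≤ 1) {j k : ℕ}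
    (h : bVtx b hb j = bVtx b hb k) : j % b.length = k % b.length := by
  have hpos := List.length_pos_iff.2 hb
  have := hthin (bVtx b hb k)
  rw [finrank_bandRep, mul_one, Fintype.card_le_one_iff] at this
  have e := this
    ⟨⟨j % b.length, Nat.mod_lt _ hpos⟩, by rw [← h]; exact bVtx_congr hb (Nat.mod_mod _ _)⟩
    ⟨⟨k % b.length, Nat.mod_lt _ hpos⟩, bVtx_congr hb (Nat.mod_mod _ _)⟩
  simpa using e

/-- The Jordan block with non-zero eigenvalue is injective: it is lower bidiagonal, so the
coordinates of a kernel vector vanish one after the other. -/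
lemma jord_inj {K : Type} [Field K] {lam : K} (hlam : lam ≠ 0) {r : ℕ} (x : Fin r → K)
    (hx : ∀ κ, ∑ μ, jordEntry lam κ μ * x μ = 0) : x = 0 := by
  have : ∀ n (h : n < r), x ⟨n, h⟩ = 0 := by
    intro n
    induction n using Nat.strong_induction_on with
    | _ n ih =>
      intro h
      have := hx ⟨n, h⟩
      rw [Finset.sum_eq_single ⟨n, h⟩] at this
      · simpa [jordEntry, hlam] using this
      · intro μ _ hμ
        unfold jordEntry
        rw [if_neg (Ne.symm hμ)]
        split_ifs with h1
        · simp only at h1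
          rw [show x μ = 0 from ih μ (by omega) μ.2, mul_zero]
        · rw [zero_mul]
      · simp
  funext κ
  exact this κ κ.2

/-- The set of underlying arrows of a word. -/
def arrSet (w : List (Letter Q)) : Set Q.A := {a | ∃ c ∈ w, und c = a}

lemma mem_arrSet_band (hb : b ≠ []) (a : Q.A) :
    a ∈ arrSet b ↔ ∃ j, bLett b hb j = Sum.inl a ∨ bLett b hb j = Sum.inr a := by
  constructor
  · rintro ⟨c, hc, rfl⟩
    obtain ⟨j, hj, rfl⟩ := List.getElem_of_mem hc
    refine ⟨j, ?_⟩
    rw [bLett_eq]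
    simp only [Nat.mod_eq_of_lt hj]
    cases b[j] <;> simp [und]
  · rintro ⟨j, h⟩
    rw [bLett_eq] at h
    refine ⟨_, List.getElem_mem (Nat.mod_lt j (List.length_pos_iff.2 hb)), ?_⟩
    rcases h with h | h <;> rw [h] <;> rfl

/-! ### Stability spaces of band and string modules -/

lemma stabSpace_bandRep {K : Type} [Field K] {D : BoundQuiver Q} (hb : IsBand D b)
    (hthin : ∀ i, Module.finrank K ((bandRep K Q b hb.1 (1 : K) 1).M i) ≤ 1)
    {lam : K} (hlam : lam ≠ 0) {r : ℕ} (hr : 1 ≤ r) :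
    stabSpace (bandRep K Q b hb.1 lam r) = arrCone (Set.range (bVtx b hb.1)) (arrSet b) := by
  have hpos := List.length_pos_iff.2 hb.1
  have hinj : ∀ {j k : ℕ}, bVtx b hb.1 j = bVtx b hb.1 k → j % b.length = k % b.length :=
    fun h => band_vtx_inj hb.1 hthin h
  refine stabSpace_eq_arrCone _ _ _ r hr ?_ ?_ ?_ ?_
  · rintro _ ⟨j, rfl⟩
    have h1 := hthin (bVtx b hb.1 j)
    rw [finrank_bandRep, mul_one] at h1
    have h2 : 0 < Fintype.card {k : Fin b.length // bVtx b hb.1 k = bVtx b hb.1 j} :=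
      Fintype.card_pos_iff.2
        ⟨⟨⟨j % b.length, Nat.mod_lt _ hpos⟩, bVtx_congr hb.1 (Nat.mod_mod _ _)⟩⟩
    rw [finrank_bandRep, show Fintype.card _ = 1 by omega, one_mul]
  · intro i hi
    rw [finrank_bandRep, Fintype.card_eq_zero_iff.2 ⟨fun j => hi ⟨j.1, j.2⟩⟩, zero_mul]
  · intro a ha
    -- The arrow `a` joins the unique basis block over its source to one block over its target,
    -- by an identity matrix or a Jordan block.
    obtain ⟨j, k, hj, hk, hent⟩ : ∃ (j k : Fin b.length) (_ : bVtx b hb.1 j = Q.s a)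
        (_ : bVtx b hb.1 k = Q.t a),
        (∀ κ μ : Fin r, bandEntry K b hb.1 lam a k j κ μ = if κ = μ then 1 else 0) ∨
        (∀ κ μ : Fin r, bandEntry K b hb.1 lam a k j κ μ = jordEntry lam κ μ) := by
      obtain ⟨i, hi⟩ := (mem_arrSet_band hb.1 a).1 ha
      have hnext := band_comp hb i
      have hsrc := bVtx_eq hb.1 i
      have hi0 := bLett_congr hb.1 (Nat.mod_mod i b.length)
      have hi1 := bLett_congr hb.1 (Nat.mod_mod (i + 1) b.length)
      rcases hi with hi | hi
      · refine ⟨⟨i % b.length, Nat.mod_lt _ hpos⟩, ⟨(i + 1) % b.length, Nat.mod_lt _ hpos⟩,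
          ?_, ?_, ?_⟩
        · rw [bVtx_congr hb.1 (Nat.mod_mod _ _), hsrc, hi]; rfl
        · rw [bVtx_congr hb.1 (Nat.mod_mod _ _), hnext, hi]; rfl
        · have hne : bLett b hb.1 (i + 1) ≠ Sum.inr a := by
            have := band_red hb i
            rwa [hi] at this
          unfold bandEntry
          simp only [hi0, hi1, hi, hne, false_and, if_false, add_zero, Nat.mod_mod]
          by_cases hl : i % b.length + 1 = b.length
          · right; intro κ μ; rw [if_pos (by simp), if_pos hl]
          · left; intro κ μ; simp only [hl]; simp
      · refine ⟨⟨(i + 1) % b.length, Nat.mod_lt _ hpos⟩, ⟨i % b.length, Nat.mod_lt _ hpos⟩,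
          ?_, ?_, ?_⟩
        · rw [bVtx_congr hb.1 (Nat.mod_mod _ _), hnext, hi]; rfl
        · rw [bVtx_congr hb.1 (Nat.mod_mod _ _), hsrc, hi]; rfl
        · have hne : bLett b hb.1 (i + 1) ≠ Sum.inl a := by
            have := band_red hb i
            rwa [hi] at this
          unfold bandEntry
          simp only [hi0, hi1, hi, hne, false_and, if_false, zero_add, Nat.mod_mod]
          by_cases hl : i % b.length + 1 = b.length
          · right; intro κ μ; rw [if_pos (by simp), if_pos hl]
          · left; intro κ μ; simp only [hl]; simp
    rw [injective_iff_map_eq_zero]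
    intro x hx
    have huniq : ∀ q : {j : Fin b.length // bVtx b hb.1 (j : ℕ) = Q.s a}, q = ⟨j, hj⟩ := by
      intro q
      have := hinj (q.2.trans hj.symm)
      rw [Nat.mod_eq_of_lt q.1.2, Nat.mod_eq_of_lt j.2] at this
      exact Subtype.ext (Fin.ext this)
    have hcomp : ∀ κ : Fin r, ∑ μ : Fin r, bandEntry K b hb.1 lam a k j κ μ *
        (x : {j : Fin b.length // bVtx b hb.1 (j : ℕ) = Q.s a} × Fin r → K) (⟨j, hj⟩, μ)
          = 0 := by
      intro κ
      have := congrFun hx (⟨k, hk⟩, κ)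
      change ∑ p : {j : Fin b.length // bVtx b hb.1 (j : ℕ) = Q.s a} × Fin r,
        bandEntry K b hb.1 lam a k p.1.1 κ p.2 * _ = 0 at this
      rw [Fintype.sum_prod_type] at this
      rw [← this]
      rw [Fintype.sum_eq_single
        (⟨j, hj⟩ : {j : Fin b.length // bVtx b hb.1 (j : ℕ) = Q.s a})
        (fun q hq => absurd (huniq q) hq)]
    have hz : (fun μ => (x : {j : Fin b.length // bVtx b hb.1 (j : ℕ) = Q.s a} × Fin r → K)
        (⟨j, hj⟩, μ)) = 0 := by
      rcases hent with hent | hent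
      · funext κ
        have := hcomp κ
        simp only [hent] at this
        simpa using this
      · refine jord_inj hlam _ fun κ => ?_
        have := hcomp κ
        simpa only [hent] using this
    funext ⟨q, μ⟩
    rw [huniq q]
    exact congrFun hz μ
  · intro a ha
    rw [mem_arrSet_band hb.1] at ha
    push Not at ha
    refine LinearMap.ext fun x => funext fun p => ?_
    change ∑ q : {j : Fin b.length // bVtx b hb.1 (j : ℕ) = Q.s a} × Fin r,
        bandEntry K b hb.1 lam a p.1.1 q.1.1 p.2 q.2 * _ = 0
    refine Finset.sum_eq_zero fun q _ => ?_
    simp [bandEntry, ha]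

/-- The string `v` traverses every vertex of `b` once, so its module is constantly one-dimensional
on the vertices of `b`. -/
lemma deleted_stringRep {K : Type} [Field K] {D : BoundQuiver Q} (hb : IsBand D b)
    (hthin : ∀ i, Module.finrank K ((bandRep K Q b hb.1 (1 : K) 1).M i) ≤ 1)
    {v : List (Letter Q)} (hv : v ≠ []) (hdel : DeleteOne b v) :
    stabSpace (stringRep K Q v hv) = arrCone (Set.range (bVtx b hb.1)) (arrSet v) := by
  have hpos := List.length_pos_iff.2 hb.1
  obtain ⟨l₁, l₂, c, hbl, hvl⟩ := hdel
  have hlb : b.length = v.length + 1 := by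
    rw [hbl, hvl]; simp; omega
  -- Position `j` of `v` is position `p + j` of the cyclic word `b`.
  set p := l₁.length + 1 with hp
  have hlett : ∀ j (hj : j < v.length), v[j] = bLett b hb.1 (p + j) := by
    intro j hj
    have hl : v.length = l₂.length + l₁.length := by rw [hvl]; simp
    rw [bLett_eq]
    subst hvl
    by_cases h : j < l₂.length
    · have : (p + j) % b.length = p + j := Nat.mod_eq_of_lt (by omega)
      simp only [this]
      subst hbl
      rw [List.getElem_append_left h, List.getElem_append_right (by omega)]
      simp [hp, show l₁.length + 1 + j - l₁.length = j + 1 by omega]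
    · have : (p + j) % b.length = j - l₂.length := by
        rw [Nat.mod_eq_sub_mod (by omega), Nat.mod_eq_of_lt (by omega)]; omega
      simp only [this]
      subst hbl
      rw [List.getElem_append_right (by omega), List.getElem_append_left]
  have hvtx : ∀ j, j ≤ v.length → wVtx v hv j = bVtx b hb.1 (p + j) := by
    intro j hj
    have hvpos := List.length_pos_iff.2 hv
    cases j with
    | zero =>
      rw [wVtx, if_pos rfl, List.head_eq_getElem, hlett, bVtx_eq]
    | succ j =>
      rw [wVtx, if_neg (by omega), Nat.add_sub_cancel, List.getD_eq_getElem _ _ (by omega),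
        hlett, ← band_comp hb]
      rfl
  have hinj : ∀ j k, j ≤ v.length → k ≤ v.length → wVtx v hv j = wVtx v hv k → j = k := by
    intro j k hj hk h
    rw [hvtx j hj, hvtx k hk] at h
    have h2 : j % b.length = k % b.length :=
      Nat.ModEq.add_left_cancel' p (band_vtx_inj hb.1 hthin h)
    rwa [Nat.mod_eq_of_lt (by omega), Nat.mod_eq_of_lt (by omega)] at h2
  have hfin : ∀ i, Module.finrank K ((stringRep K Q v hv).M i) =
      Fintype.card {j : Fin (v.length + 1) // wVtx v hv j = i} := by
    intro i
    change Module.finrank K ({j : Fin (v.length + 1) // wVtx v hv j = i} → K) = _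
    rw [Module.finrank_fintype_fun_eq_card]
  have hsub : ∀ i, Subsingleton {j : Fin (v.length + 1) // wVtx v hv j = i} := by
    refine fun i => ⟨fun x y => Subtype.ext (Fin.ext ?_)⟩
    exact hinj _ _ (by omega) (by omega) (x.2.trans y.2.symm)
  refine stabSpace_eq_arrCone _ _ _ 1 le_rfl ?_ ?_ ?_ ?_
  · rintro _ ⟨j, rfl⟩
    obtain ⟨k, hk, hkj⟩ : ∃ k ≤ v.length, (p + k) % b.length = j % b.length := by
      refine ⟨(j + (b.length * p - p)) % b.length, ?_, ?_⟩
      · have := Nat.mod_lt (j + (b.length * p - p)) hpos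
        omega
      · have : p ≤ b.length * p := Nat.le_mul_of_pos_left _ hpos
        rw [Nat.add_mod_mod, show p + (j + (b.length * p - p)) = j + b.length * p by omega,
          Nat.add_mul_mod_self_left]
    rw [hfin]
    have := hsub (bVtx b hb.1 j)
    refine le_antisymm (Fintype.card_le_one_iff_subsingleton.2 inferInstance)
      (Fintype.card_pos_iff.2 ⟨⟨⟨k, by omega⟩, ?_⟩⟩)
    rw [hvtx k hk]
    exact bVtx_congr hb.1 hkj
  · intro i hi
    rw [hfin]
    refine Fintype.card_eq_zero_iff.2 ⟨fun j => hi ⟨p + j.1, ?_⟩⟩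
    rw [← hvtx _ (by omega)]
    exact j.2
  · rintro a ⟨c, hc, hca⟩
    obtain ⟨i, hi, rfl⟩ := List.getElem_of_mem hc
    obtain ⟨j, k, hj, hk, hstep⟩ : ∃ (j k : Fin (v.length + 1)) (_ : wVtx v hv j = Q.s a)
        (_ : wVtx v hv k = Q.t a), stepsTo v a j k := by
      have h0 : wVtx v hv i = lsrc v[i] := by
        rw [hvtx i hi.le, bVtx_eq, hlett i hi]
      have h1 : wVtx v hv (i + 1) = ltgt v[i] := by
        rw [hvtx (i + 1) hi, hlett i hi, ← band_comp hb]; rfl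
      rcases hvi : v[i] with a' | a'
      · rw [hvi] at h0 h1 hca
        obtain rfl : a' = a := hca
        exact ⟨⟨i, by omega⟩, ⟨i + 1, by omega⟩, h0, h1, Or.inl ⟨rfl, by simp [hi, hvi]⟩⟩
      · rw [hvi] at h0 h1 hca
        obtain rfl : a' = a := hca
        exact ⟨⟨i + 1, by omega⟩, ⟨i, by omega⟩, h1, h0, Or.inr ⟨rfl, by simp [hi, hvi]⟩⟩
    rw [injective_iff_map_eq_zero]
    intro x hx
    have := congrFun hx ⟨k, hk⟩
    change ∑ q : {j : Fin (v.length + 1) // wVtx v hv (j : ℕ) = Q.s a},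
      (if stepsTo v a q.1 k then (1 : K) else 0) * _ = 0 at this
    have huniq : ∀ q : {j : Fin (v.length + 1) // wVtx v hv (j : ℕ) = Q.s a}, q = ⟨j, hj⟩ :=
      fun q => (hsub _).elim _ _
    rw [Fintype.sum_eq_single
      (⟨j, hj⟩ : {j : Fin (v.length + 1) // wVtx v hv (j : ℕ) = Q.s a})
      (fun q hq => absurd (huniq q) hq), if_pos hstep, one_mul] at this
    funext q
    rw [huniq q]
    exact this
  · intro a ha
    have hno : ∀ j k, ¬ stepsTo v a j k := by
      rintro j k (⟨-, h⟩ | ⟨-, h⟩)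
      · exact ha ⟨_, List.mem_of_getElem? h, rfl⟩
      · exact ha ⟨_, List.mem_of_getElem? h, rfl⟩
    refine LinearMap.ext fun x => funext fun p => ?_
    change ∑ q : {j : Fin (v.length + 1) // wVtx v hv (j : ℕ) = Q.s a},
      (if stepsTo v a q.1 p.1 then (1 : K) else 0) * _ = 0
    refine Finset.sum_eq_zero fun q _ => ?_
    rw [if_neg (hno _ _), zero_mul]

/-- The endpoints of every underlying arrow of a band are traversed by the band. -/
lemma arr_ends_mem {D : BoundQuiver Q} (hb : IsBand D b) {a : Q.A} (ha : a ∈ arrSet b) :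
    Q.s a ∈ Set.range (bVtx b hb.1) ∧ Q.t a ∈ Set.range (bVtx b hb.1) := by
  obtain ⟨j, h | h⟩ := (mem_arrSet_band hb.1 a).1 ha
  · exact ⟨⟨j, by rw [bVtx_eq, h]; rfl⟩, ⟨j + 1, by rw [band_comp hb, h]; rfl⟩⟩
  · exact ⟨⟨j + 1, by rw [band_comp hb, h]; rfl⟩, ⟨j, by rw [bVtx_eq, h]; rfl⟩⟩

end band

/-! ### The preorder of a word -/

lemma wordRel_closed {Q : FinQuiver} {w : List (Letter Q)} {X : Set Q.V}
    (hX : ArrClosed (arrSet w) X) {x y : Q.V} (h : wordRel w x y) (hy : y ∈ X) : x ∈ X := by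
  induction h with
  | refl => exact hy
  | tail _ h ih =>
    obtain ⟨c, hc, rfl, rfl⟩ := h
    exact ih (hX _ ⟨c, hc, rfl⟩ hy)

lemma arrClosed_of_wordRel {Q : FinQuiver} {w : List (Letter Q)} {X : Set Q.V}
    (h : ∀ x y, wordRel w x y → y ∈ X → x ∈ X) : ArrClosed (arrSet w) X := by
  rintro a ⟨c, hc, rfl⟩ hs
  exact h _ _ (Relation.ReflTransGen.single ⟨c, hc, rfl, rfl⟩) hs

/-- Let `b` be a band with `M(b,1,1)` thin, and let `v, v'` be two
distinct strings obtained from `b` by deleting one letter. Then the stability space of the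
band module `N = M(b, λ, r)` is the non-negative span of `D(M(v)) ∪ D(M(v'))`; moreover
`D(N) = D(M(v))` if and only if `v` and `b` induce the same preorder (poset) on the
traversed vertices. -/
theorem band_stability_space_from_deleted_strings
    (K : Type) [Field K] [IsAlgClosed K] (Q : FinQuiver) (D : BoundQuiver Q)
    (hsb : SpecialBiserial D) (b : List (Letter Q)) (hb : IsBand D b)
    (hthin : ∀ i, Module.finrank K ((bandRep K Q b hb.1 (1 : K) 1).M i) ≤ 1)
    (lam : K) (hlam : lam ≠ 0) (r : ℕ) (hr : 1 ≤ r)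
    (v v' : List (Letter Q)) (hv : IsString D v) (hv' : IsString D v')
    (hdel : DeleteOne b v) (hdel' : DeleteOne b v') (hvv : v ≠ v') :
    stabSpace (bandRep K Q b hb.1 lam r) =
        coneSpan (stabSpace (stringRep K Q v hv.ne) ∪ stabSpace (stringRep K Q v' hv'.ne)) ∧
      (stabSpace (bandRep K Q b hb.1 lam r) = stabSpace (stringRep K Q v hv.ne) ↔
        wordRel v = wordRel b) := by
  rw [stabSpace_bandRep hb hthin hlam hr, deleted_stringRep hb hthin hv.ne hdel,
    deleted_stringRep hb hthin hv'.ne hdel']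
  obtain ⟨l₁, l₂, c, hbl, hvl⟩ := hdel
  obtain ⟨l₁', l₂', c', hbl', hvl'⟩ := hdel'
  set S := Set.range (bVtx b hb.1)
  have hins : arrSet b = insert (und c) (arrSet v) := by
    ext a
    simp only [arrSet, hbl, hvl, Set.mem_insert_iff, Set.mem_ofPred_eq, List.mem_append,
      List.mem_cons]
    grind
  have hsub : arrSet v ⊆ arrSet b := hins ▸ Set.subset_insert _ _
  have hsub' : arrSet v' ⊆ arrSet b := by
    rintro a ⟨d, hd, rfl⟩
    refine ⟨d, ?_, rfl⟩
    rw [hvl'] at hd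
    rw [hbl']
    simp only [List.mem_append, List.mem_cons] at hd ⊢
    tauto
  have hcb : und c ∈ arrSet b := hins ▸ Set.mem_insert _ _
  obtain ⟨hs, ht⟩ := arr_ends_mem hb hcb
  -- The deleted positions differ, so the letter missing from `v` occurs in `v'`.
  have hcv' : und c ∈ arrSet v' := by
    refine ⟨c, ?_, rfl⟩
    rw [hvl', List.mem_append]
    have e := hbl.symm.trans hbl'
    rcases lt_trichotomy l₁.length l₁'.length with h | h | h
    · right
      have h1 : b[l₁.length]? = some c := by rw [hbl]; simp
      rw [hbl', List.getElem?_append_left h] at h1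
      exact List.mem_of_getElem? h1
    · exfalso
      obtain ⟨rfl, e2⟩ := List.append_inj e h
      obtain ⟨-, rfl⟩ := List.cons.inj e2
      exact hvv (hvl.trans hvl'.symm)
    · left
      have h1 : b[l₁.length]? = some c := by rw [hbl]; simp
      rw [hbl', List.getElem?_append_right h.le,
        show l₁.length - l₁'.length = (l₁.length - l₁'.length - 1) + 1 by omega,
        List.getElem?_cons_succ] at h1
      exact List.mem_of_getElem? h1
  refine ⟨Set.Subset.antisymm ?_ ?_, ?_, ?_⟩
  · intro θ hθ
    rw [hins] at hθ
    obtain ⟨k, hk, η, hη, rfl⟩ := arrCone_insert hs ht hθ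
    refine ⟨2, ![1, k], ![η, arrVec (und c)], ?_, ?_, by simp [Fin.sum_univ_two]⟩
    · intro j; fin_cases j <;> simp [hk]
    · intro j
      fin_cases j
      · exact Or.inl hη
      · exact Or.inr (arrVec_mem hcv' hs ht)
  · rintro _ ⟨n, k, f, hk, hf, rfl⟩
    exact arrCone_comb n k f hk fun j =>
      (hf j).elim (fun h => arrCone_anti hsub h) (fun h => arrCone_anti hsub' h)
  · intro heq
    -- Test the equality on `e_{s(a)} - e_{t(a)}` for the deleted arrow `a` and the down-set
    -- of `s(a)` for `v`: the weight is `1` unless `t(a)` lies below `s(a)` already in `v`.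
    have hmem : arrVec (und c) ∈ arrCone S (arrSet v) := heq ▸ arrVec_mem hcb hs ht
    have hX := hmem.2 {y | wordRel v y (Q.s (und c))}
      (arrClosed_of_wordRel fun x y hxy hy => Relation.ReflTransGen.trans hxy hy)
    have hrel : wordRel v (Q.t (und c)) (Q.s (und c)) := by
      by_contra hno
      have hself : wordRel v (Q.s (und c)) (Q.s (und c)) := Relation.ReflTransGen.refl
      rw [wt_arrVec, Set.indicator_of_mem (by exact ⟨hs, hself⟩),
        Set.indicator_of_notMem (by exact fun h => hno h.2)] at hX
      norm_num at hX
    have hle : ∀ d ∈ b, wordRel v (Q.t (und d)) (Q.s (und d)) := by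
      intro d hd
      have : und d ∈ insert (und c) (arrSet v) := hins ▸ ⟨d, hd, rfl⟩
      rcases this with h | ⟨d', hd', h⟩
      · rw [h]; exact hrel
      · exact Relation.ReflTransGen.single ⟨d', hd', by rw [h], by rw [h]⟩
    funext x y
    refine propext ⟨fun h => ?_, fun h => ?_⟩
    · refine Relation.ReflTransGen.mono ?_ _ _ h
      rintro _ _ ⟨d, hd, rfl, rfl⟩
      refine ⟨d, ?_, rfl, rfl⟩
      rw [hvl] at hd
      rw [hbl]
      simp only [List.mem_append, List.mem_cons] at hd ⊢
      tauto
    · induction h with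
      | refl => exact Relation.ReflTransGen.refl
      | tail _ h ih =>
        obtain ⟨d, hd, rfl, rfl⟩ := h
        exact Relation.ReflTransGen.trans ih (hle d hd)
  · intro hrel
    refine Set.Subset.antisymm (fun θ hθ => ⟨hθ.1, fun X hX => hθ.2 X ?_⟩) (arrCone_anti hsub)
    exact arrClosed_of_wordRel fun x y hxy hy =>
      wordRel_closed hX (hrel ▸ hxy) hy
end

section
/- Let A = KQ/I be a special biserial algebra over an algebraically closed field K and b a band for A such that M(b,1,1) is thin. Then for every x ∈ D_supp(M(b,1,1)) there exist a cyclic rotation b' = β_1⋯β_n of b and an integer 0 ≤ m < n, giving the infinite family of strings {b'^r w : r ∈ N} with w = β_1⋯β_m, such that for every ε > 0 there exists r_ε ∈ N with B(x,ε) ∩ D_supp(M(b'^s w)) ≠ ∅ for every s ≥ r_ε, where B(x,ε) denotes the open ball of radius ε around x in R^{supp M(b,1,1)}. -/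
/-!
The point `x` itself lies in the stability space of every string module of a suitable family, so
no approximation is needed.

Let `b` have length `n` and visit the vertices `v_0, …, v_{n-1}`, which are distinct because the
band module is thin, and let `F_j = x(v_0) + ⋯ + x(v_j)`. An arc of the cycle entered by a direct
letter `i` and by an inverse letter `j` spans a subrepresentation, so semistability gives
`F_j ≤ F_i` (`band_partial_sum_le`). Therefore some letter `i` satisfies `F_i ≤ F_j` for all direct
`j` and `F_j ≤ F_i` for all inverse `j` (`exists_cut_letter`); that is, `F - F_i` is a flow on the
cyclic quiver with divergence `x` which vanishes at the letter `i`.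

Let `b' = β_1 ⋯ β_n` be the rotation of `b` whose last letter is `i`, and take `m = n - 1`. The
walk `b'^s β_1 ⋯ β_{n-1}` visits every vertex exactly `s + 1` times, and the flow `F - F_i`, unrolled
along the walk, vanishes at both of its ends. Summation by parts (`sum_flow_nonpos`) then shows
that every set of positions closed under the arrows has nonpositive weight.

A subrepresentation of the string module need not be spanned by basis vectors. However, as the
`v_j` are distinct, every arrow is used in one direction only (`band_not_mixed`), so it acts by
shifting all positions the same way and preserves their order. Hence the positions of leading
terms of a subrepresentation are closed under the arrows (`stringPivot_step`), and they count its
dimension vector (`finrank_eq_card_pivots`), which reduces semistability to sets of positions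
(`stringRep_semistable`).
-/

attribute [local instance] Classical.propDecidable

/-! ### Pivots of a subspace of a coordinate space -/

/-- A coordinate `t` is a pivot of the subspace `L ⊆ K^ι`, with respect to the ordering of the
coordinates by `f`, if it is the first nonzero coordinate of some vector of `L`. -/
def IsPivot {K ι : Type} [Field K] (f : ι → ℕ) (L : Submodule K (ι → K)) (t : ι) : Prop :=
  ∃ z ∈ L, z t ≠ 0 ∧ ∀ u, f u < f t → z u = 0

/-- The vectors of `L` all of whose coordinates of rank below `τ` vanish. -/
def pivotFil {K ι : Type} [Field K] (f : ι → ℕ) (L : Submodule K (ι → K)) (τ : ℕ) :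
    Submodule K (ι → K) where
  carrier := {z | z ∈ L ∧ ∀ t', f t' < τ → z t' = 0}
  add_mem' := by
    rintro z z' ⟨hz, hz0⟩ ⟨hz', hz0'⟩
    exact ⟨L.add_mem hz hz', fun t ht => by simp [hz0 t ht, hz0' t ht]⟩
  zero_mem' := ⟨L.zero_mem, fun _ _ => rfl⟩
  smul_mem' := by
    rintro c z ⟨hz, hz0⟩
    exact ⟨L.smul_mem c hz, fun t ht => by simp [hz0 t ht]⟩

lemma mem_pivotFil {K ι : Type} [Field K] {f : ι → ℕ} {L : Submodule K (ι → K)} {τ : ℕ}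
    {z : ι → K} : z ∈ pivotFil f L τ ↔ z ∈ L ∧ ∀ t', f t' < τ → z t' = 0 := Iff.rfl

/-- One step of the filtration: passing from `f t + 1` to `f t` raises the dimension by one
exactly when `t` is a pivot, by rank-nullity for the coordinate functional at `t`. -/
lemma finrank_pivotFil_step {K ι : Type} [Field K] [Fintype ι] {f : ι → ℕ}
    (hf : Function.Injective f) (L : Submodule K (ι → K)) (t : ι) :
    Module.finrank K (pivotFil f L (f t)) =
      (if IsPivot f L t then 1 else 0) + Module.finrank K (pivotFil f L (f t + 1)) := by
  set p : pivotFil f L (f t) →ₗ[K] K :=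
    (LinearMap.proj t : (ι → K) →ₗ[K] K).comp (pivotFil f L (f t)).subtype with hp
  have hle : pivotFil f L (f t + 1) ≤ pivotFil f L (f t) :=
    fun z hz => ⟨hz.1, fun t' ht' => hz.2 t' (by omega)⟩
  have hker : LinearMap.ker p = (pivotFil f L (f t + 1)).comap (pivotFil f L (f t)).subtype := by
    ext ⟨z, hz⟩
    simp only [hp, LinearMap.mem_ker, LinearMap.comp_apply, Submodule.subtype_apply,
      LinearMap.proj_apply, Submodule.mem_comap, mem_pivotFil]
    refine ⟨fun h => ⟨hz.1, fun t' ht' => ?_⟩, fun h => h.2 t (by omega)⟩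
    rcases Nat.lt_succ_iff_lt_or_eq.mp ht' with h' | h'
    · exact hz.2 t' h'
    · rw [hf h']; exact h
  have hk : Module.finrank K (LinearMap.ker p) = Module.finrank K (pivotFil f L (f t + 1)) := by
    rw [hker]
    exact (Submodule.comapSubtypeEquivOfLe hle).finrank_eq
  rw [← LinearMap.finrank_range_add_finrank_ker p, hk]
  congr 1
  split_ifs with h
  · obtain ⟨z, hz, hzt, hz0⟩ := h
    have hr : LinearMap.range p = ⊤ := by
      rw [LinearMap.range_eq_top]
      refine LinearMap.surjective fun h0 => hzt ?_
      exact LinearMap.congr_fun h0 (⟨z, hz, hz0⟩ : pivotFil f L (f t))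
    rw [hr]; simp
  · have hr : LinearMap.range p = ⊥ := by
      rw [LinearMap.range_eq_bot]
      ext ⟨z, hz⟩
      by_contra hne
      exact h ⟨z, hz.1, hne, hz.2⟩
    rw [hr]; simp

lemma finrank_pivotFil {K ι : Type} [Field K] [Fintype ι] {f : ι → ℕ}
    (hf : Function.Injective f) (L : Submodule K (ι → K)) (B : ℕ) (hB : ∀ t, f t < B) (d : ℕ) :
    ∀ τ, B ≤ τ + d → Module.finrank K (pivotFil f L τ) =
      (Finset.univ.filter fun t => IsPivot f L t ∧ τ ≤ f t).card := by
  have hend : ∀ τ, B ≤ τ → Module.finrank K (pivotFil f L τ) =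
      (Finset.univ.filter fun t => IsPivot f L t ∧ τ ≤ f t).card := by
    intro τ hτ
    have h1 : pivotFil f L τ = ⊥ := by
      rw [eq_bot_iff]
      intro z hz
      exact funext fun t => hz.2 t (lt_of_lt_of_le (hB t) hτ)
    have h2 : (Finset.univ.filter fun t => IsPivot f L t ∧ τ ≤ f t) = ∅ := by
      ext t
      have := hB t
      simp only [Finset.mem_filter, Finset.mem_univ, true_and, Finset.notMem_empty, iff_false]
      omega
    rw [h1, h2]; simp
  induction d with
  | zero => exact fun τ hτ => hend τ (by omega)
  | succ d ih =>
    intro τ hτ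
    by_cases ht : ∃ t, f t = τ
    · obtain ⟨t, rfl⟩ := ht
      rw [finrank_pivotFil_step hf, ih (f t + 1) (by omega)]
      have : (Finset.univ.filter fun t' => IsPivot f L t' ∧ f t ≤ f t') =
          (if IsPivot f L t then {t} else ∅) ∪
          (Finset.univ.filter fun t' => IsPivot f L t' ∧ f t + 1 ≤ f t') := by
        ext t'
        have := @hf t t'
        split_ifs with h <;>
        simp only [Finset.mem_filter, Finset.mem_univ, true_and, Finset.mem_union,
          Finset.mem_singleton, Finset.notMem_empty, false_or]
        · constructor
          · rintro ⟨h1, h2⟩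
            rcases Nat.eq_or_lt_of_le h2 with h3 | h3
            · exact Or.inl (this h3).symm
            · exact Or.inr ⟨h1, h3⟩
          · rintro (rfl | ⟨h1, h2⟩)
            · exact ⟨h, le_rfl⟩
            · exact ⟨h1, by omega⟩
        · constructor
          · rintro ⟨h1, h2⟩
            rcases Nat.eq_or_lt_of_le h2 with h3 | h3
            · exact absurd (this h3 ▸ h1) h
            · exact ⟨h1, h3⟩
          · rintro ⟨h1, h2⟩
            exact ⟨h1, by omega⟩
      rw [this, Finset.card_union_of_disjoint]
      · split_ifs <;> simp
      · split_ifs <;> simp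
    · have h1 : pivotFil f L τ = pivotFil f L (τ + 1) := by
        ext z
        simp only [mem_pivotFil]
        refine and_congr_right fun _ => forall_congr' fun t => ?_
        have : f t ≠ τ := fun h => ht ⟨t, h⟩
        have : f t < τ ↔ f t < τ + 1 := by omega
        rw [this]
      rw [h1, ih (τ + 1) (by omega)]
      congr 1
      ext t
      have : f t ≠ τ := fun h => ht ⟨t, h⟩
      have : τ + 1 ≤ f t ↔ τ ≤ f t := by omega
      simp only [Finset.mem_filter, Finset.mem_univ, true_and, this]

/-- The dimension of a subspace of a coordinate space is its number of pivots. -/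
lemma finrank_eq_card_pivots {K ι : Type} [Field K] [Fintype ι] {f : ι → ℕ}
    (hf : Function.Injective f) (L : Submodule K (ι → K)) :
    Module.finrank K L = (Finset.univ.filter (IsPivot f L)).card := by
  have hL : pivotFil f L 0 = L := by
    ext z; simp [mem_pivotFil]
  have hB : ∀ t, f t < ∑ t, f t + 1 := fun t =>
    Nat.lt_succ_of_le (Finset.single_le_sum (fun _ _ => Nat.zero_le _) (Finset.mem_univ t))
  have := finrank_pivotFil hf L _ hB (∑ t, f t + 1) 0 (by omega)
  rw [hL] at this
  rw [this]
  congr 1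
  ext t
  simp

/-! ### Semistability of string modules -/

/-- Summing a vertex weight against fibrewise counts is summing it over positions. -/
lemma sum_mul_card_fiber {V ι : Type} [Fintype V] [DecidableEq V] [Fintype ι] (v : ι → V)
    (y : V → ℝ) (P : ι → Prop) [DecidablePred P] :
    ∑ i, y i * ((Finset.univ.filter fun p : {j // v j = i} => P p.1).card : ℝ) =
      ∑ j, if P j then y (v j) else 0 := by
  rw [← Finset.sum_fiberwise Finset.univ v]
  refine Finset.sum_congr rfl fun i _ => ?_
  have : (Finset.univ.filter fun p : {j // v j = i} => P p.1).card =
      (Finset.univ.filter fun j => v j = i ∧ P j).card := by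
    refine Finset.card_bij (fun p _ => p.1) ?_ ?_ ?_
    · intro p hp
      simp only [Finset.mem_filter, Finset.mem_univ, true_and] at hp ⊢
      exact ⟨p.2, hp⟩
    · intro p _ q _ h; exact Subtype.ext h
    · intro j hj
      simp only [Finset.mem_filter, Finset.mem_univ, true_and] at hj
      exact ⟨⟨j, hj.1⟩, by simpa using hj.2, rfl⟩
  rw [this, Finset.card_filter, Nat.cast_sum, Finset.mul_sum, Finset.sum_filter]
  refine Finset.sum_congr rfl fun j _ => ?_
  by_cases h1 : v j = i <;> by_cases h2 : P j <;> simp [h1, h2]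

/-- Summation by parts. The partial sum up to `k` is the flow through the edge joining `k` and
`k + 1`; if no edge carries flow out of `P` and the total is `0`, then `P` has nonpositive
weight. -/
lemma sum_flow_nonpos (N : ℕ) (z : ℕ → ℝ) (P : ℕ → Prop) [DecidablePred P]
    (h : ∀ k < N, (∑ l ∈ Finset.range (k + 1), z l) *
      ((if P k then (1 : ℝ) else 0) - (if P (k + 1) then 1 else 0)) ≤ 0)
    (h0 : ∑ l ∈ Finset.range (N + 1), z l = 0) :
    ∑ k ∈ Finset.range (N + 1), (if P k then z k else 0) ≤ 0 := by
  have key : ∀ M ≤ N, ∑ k ∈ Finset.range (M + 1), (if P k then z k else 0) ≤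
      (∑ l ∈ Finset.range (M + 1), z l) * (if P M then (1 : ℝ) else 0) := by
    intro M
    induction M with
    | zero => intro _; simp
    | succ M ih =>
      intro hM
      have h1 := ih (by omega)
      have h2 := h M (by omega)
      rw [Finset.sum_range_succ, Finset.sum_range_succ z (M + 1)]
      have h3 : (if P (M + 1) then z (M + 1) else 0) =
        z (M + 1) * (if P (M + 1) then (1 : ℝ) else 0) := by split_ifs <;> simp
      rw [h3]
      nlinarith
  have := key N le_rfl
  rwa [h0, zero_mul] at this

/-- A position `j` of the walk `w` is a pivot of the subrepresentation `L` of `M(w)`. -/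
def StringPivot {K : Type} [Field K] {Q : FinQuiver} {w : List (Letter Q)} {hw : w ≠ []}
    (L : QSubRep (stringRep K Q w hw)) (j : Fin (w.length + 1)) : Prop :=
  ∃ (i : Q.V) (h : wVtx w hw j = i),
    IsPivot (K := K) (fun p : {j : Fin (w.length + 1) // wVtx w hw j = i} => (p.1 : ℕ))
      (L.L i) ⟨j, h⟩

lemma stringRep_φ_apply {K : Type} [Field K] {Q : FinQuiver} {w : List (Letter Q)} {hw : w ≠ []}
    (a : Q.A) (z : {j : Fin (w.length + 1) // wVtx w hw j = Q.s a} → K)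
    (p : {j : Fin (w.length + 1) // wVtx w hw j = Q.t a}) :
    ((stringRep K Q w hw).φ a z :
      {j : Fin (w.length + 1) // wVtx w hw j = Q.t a} → K) p =
      ∑ q : {j : Fin (w.length + 1) // wVtx w hw j = Q.s a},
        (if stepsTo w a q.1 p.1 then (1 : K) else 0) * z q := rfl

/-- Pivots of a subrepresentation of `M(w)` are closed under the arrows of the walk. Because
no arrow is used in both directions, each arrow shifts all positions the same way, hence
preserves the order of positions and sends leading terms to leading terms. -/
lemma stringPivot_step {K : Type} [Field K] {Q : FinQuiver} {w : List (Letter Q)} {hw : w ≠ []}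
    (hmix : ∀ a, Sum.inl a ∈ w → Sum.inr a ∉ w)
    (L : QSubRep (stringRep K Q w hw)) {a : Q.A} {j k : Fin (w.length + 1)}
    (hs : wVtx w hw j = Q.s a) (ht : wVtx w hw k = Q.t a) (hst : stepsTo w a j k)
    (hj : StringPivot L j) : StringPivot L k := by
  obtain ⟨i, rfl, hj⟩ := hj
  have hj' : IsPivot (K := K)
      (fun p : {j : Fin (w.length + 1) // wVtx w hw j = Q.s a} => (p.1 : ℕ))
      (L.L (Q.s a)) ⟨j, hs⟩ := by
    have : ∀ (i' : Q.V) (h : wVtx w hw j = i'), IsPivot (K := K)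
        (fun p : {j : Fin (w.length + 1) // wVtx w hw j = i'} => (p.1 : ℕ))
        (L.L i') ⟨j, h⟩ := by
      rintro i' rfl; exact hj
    exact this _ hs
  obtain ⟨z, hz, hzj, hz0⟩ := hj'
  have hshift : ∀ j' k' : ℕ, stepsTo w a j' k' → (j' < j ∧ k' < k) ∨ (j' = j ∧ k' = k) ∨
      ((j : ℕ) < j' ∧ (k : ℕ) < k') := by
    intro j' k' h'
    rcases hst with ⟨h1, h2⟩ | ⟨h1, h2⟩ <;> rcases h' with ⟨h3, h4⟩ | ⟨h3, h4⟩
    · omega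
    · exact absurd (List.mem_of_getElem? h4) (hmix a (List.mem_of_getElem? h2))
    · exact absurd (List.mem_of_getElem? h2) (hmix a (List.mem_of_getElem? h4))
    · omega
  refine ⟨Q.t a, ht, (stringRep K Q w hw).φ a z, L.compat a z hz, ?_, ?_⟩
  · refine ne_of_eq_of_ne (stringRep_φ_apply a z ⟨k, ht⟩) ?_
    have : ∑ q : {j : Fin (w.length + 1) // wVtx w hw j = Q.s a},
        (if stepsTo w a q.1 k then (1 : K) else 0) * z q = z ⟨j, hs⟩ := by
      rw [Finset.sum_eq_single ⟨j, hs⟩]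
      · simp [hst]
      · intro q _ hq
        have : ¬ stepsTo w a q.1 k := by
          intro h
          apply hq
          rcases hshift _ _ h with h | h | h
          · omega
          · exact Subtype.ext (Fin.ext h.1)
          · omega
        simp [this]
      · simp
    rw [this]; exact hzj
  · rintro ⟨k', hk'⟩ hlt
    refine (stringRep_φ_apply a z ⟨k', hk'⟩).trans (Finset.sum_eq_zero fun q _ => ?_)
    split_ifs with h
    · have hlt' : (k' : ℕ) < k := hlt
      have : z q = 0 := by
        refine hz0 q ?_
        change (q.1 : ℕ) < j
        rcases hshift (q.1 : ℕ) (k' : ℕ) h with h | h | h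
        · exact h.1
        · omega
        · omega
      rw [this, mul_zero]
    · rw [zero_mul]

/-- A string module `M(w)` using each arrow in one direction only is `y`-semistable as soon as
the partial sums of `y` along `w` form a flow: nonnegative on direct letters, nonpositive on
inverse letters, and zero at the end. -/
lemma stringRep_semistable {K : Type} [Field K] {Q : FinQuiver} {w : List (Letter Q)}
    {hw : w ≠ []} (hmix : ∀ a, Sum.inl a ∈ w → Sum.inr a ∉ w)
    (v : ℕ → Q.V) (hv : ∀ k ≤ w.length, wVtx w hw k = v k)
    (hlett : ∀ k (c : Letter Q), w[k]? = some c → lsrc c = v k ∧ ltgt c = v (k + 1))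
    (y : Q.V → ℝ)
    (hdir : ∀ k a, w[k]? = some (Sum.inl a) → 0 ≤ ∑ l ∈ Finset.range (k + 1), y (v l))
    (hinv : ∀ k a, w[k]? = some (Sum.inr a) → ∑ l ∈ Finset.range (k + 1), y (v l) ≤ 0)
    (h0 : ∑ l ∈ Finset.range (w.length + 1), y (v l) = 0) :
    IsSemistable (stringRep K Q w hw) y := by
  constructor
  · have h1 : ∀ i, (stringRep K Q w hw).dimVec i = (Finset.univ.filter
        fun p : {j : Fin (w.length + 1) // wVtx w hw j = i} => True).card := by
      intro i
      refine (Module.finrank_fintype_fun_eq_card K).trans ?_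
      simp
    simp only [stabInner, h1]
    refine (sum_mul_card_fiber (fun j : Fin (w.length + 1) => wVtx w hw j) y
      (fun _ => True)).trans ?_
    simp only [if_true]
    rw [← h0, Finset.sum_range]
    exact Finset.sum_congr rfl fun j _ => by rw [hv j (by omega)]
  · intro L
    have h1 : ∀ i, Module.finrank K (L.L i) = (Finset.univ.filter
        fun p : {j : Fin (w.length + 1) // wVtx w hw j = i} => StringPivot L p.1).card := by
      intro i
      refine (finrank_eq_card_pivots (K := K)
        (f := fun p : {j : Fin (w.length + 1) // wVtx w hw j = i} => (p.1 : ℕ))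
        (fun p q h => Subtype.ext (Fin.ext h)) (L.L i)).trans ?_
      congr 1
      ext ⟨j, hj⟩
      simp only [Finset.mem_filter, Finset.mem_univ, true_and]
      constructor
      · exact fun h => ⟨i, hj, h⟩
      · subst hj
        rintro ⟨_, rfl, h⟩; exact h
    simp only [stabInner, h1]
    refine (sum_mul_card_fiber (fun j : Fin (w.length + 1) => wVtx w hw j) y
      (StringPivot L)).trans_le ?_
    set P : ℕ → Prop := fun k => ∃ h : k < w.length + 1, StringPivot L ⟨k, h⟩ with hP
    have h2 : ∑ j : Fin (w.length + 1), (if StringPivot L j then y (wVtx w hw j) else 0) =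
        ∑ k ∈ Finset.range (w.length + 1), (if P k then y (v k) else 0) := by
      rw [Finset.sum_range]
      refine Finset.sum_congr rfl fun j _ => ?_
      have : P j ↔ StringPivot L j :=
        ⟨fun ⟨_, h⟩ => h, fun h => ⟨j.2, h⟩⟩
      rw [hv j (by omega)]
      simp only [this]
    rw [h2]
    refine sum_flow_nonpos _ _ _ (fun k hk => ?_) h0
    obtain ⟨c, hc⟩ : ∃ c, w[k]? = some c := ⟨w[k], List.getElem?_eq_getElem hk⟩
    obtain ⟨hl1, hl2⟩ := hlett k c hc
    rcases c with a | a
    · have hd := hdir k a hc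
      have hstep : P k → P (k + 1) := by
        rintro ⟨hk1, hp⟩
        refine ⟨by omega, stringPivot_step hmix L (a := a) (j := ⟨k, hk1⟩) ?_ ?_ ?_ hp⟩
        · rw [hv _ (by simp; omega)]; exact hl1.symm
        · rw [hv _ (by simp; omega)]; exact hl2.symm
        · exact Or.inl ⟨rfl, hc⟩
      by_cases p1 : P k
      · simp [p1, hstep p1]
      · by_cases p2 : P (k + 1) <;> simp [p1, p2, hd]
    · have hd := hinv k a hc
      have hstep : P (k + 1) → P k := by
        rintro ⟨hk1, hp⟩
        refine ⟨by omega, stringPivot_step hmix L (a := a) (j := ⟨k + 1, hk1⟩) ?_ ?_ ?_ hp⟩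
        · rw [hv _ (by simp; omega)]; exact hl2.symm
        · rw [hv _ (by simp; omega)]; exact hl1.symm
        · exact Or.inr ⟨rfl, hc⟩
      by_cases p1 : P (k + 1)
      · simp [p1, hstep p1]
      · by_cases p2 : P k <;> simp [p1, p2, hd]

/-! ### Cyclic words -/

lemma bLett_add_length {Q : FinQuiver} (b : List (Letter Q)) (hb : b ≠ []) (k : ℕ) :
    bLett b hb (k + b.length) = bLett b hb k := by
  simp [bLett]

lemma bLett_mod {Q : FinQuiver} (b : List (Letter Q)) (hb : b ≠ []) (k : ℕ) :
    bLett b hb (k % b.length) = bLett b hb k := by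
  simp [bLett]

lemma lsrc_bLett {Q : FinQuiver} (b : List (Letter Q)) (hb : b ≠ []) (k : ℕ) :
    lsrc (bLett b hb k) = bVtx b hb k := rfl

lemma bVtx_add_length {Q : FinQuiver} (b : List (Letter Q)) (hb : b ≠ []) (k : ℕ) :
    bVtx b hb (k + b.length) = bVtx b hb k :=
  congrArg lsrc (bLett_add_length b hb k)

lemma getElem?_eq_bLett {Q : FinQuiver} (b : List (Letter Q)) (hb : b ≠ []) {k : ℕ}
    (hk : k < b.length) : b[k]? = some (bLett b hb k) := by
  simp [bLett, Nat.mod_eq_of_lt hk, hk]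

lemma length_listPow {α : Type} (u : List α) (s : ℕ) :
    (listPow u s).length = s * u.length := by
  induction s with
  | zero => simp [listPow]
  | succ s ih => simp [listPow, ih, Nat.succ_mul, Nat.add_comm]

lemma getElem?_listPow {Q : FinQuiver} (b : List (Letter Q)) (hb : b ≠ []) (s : ℕ) :
    ∀ k < s * b.length, (listPow b s)[k]? = some (bLett b hb k) := by
  induction s with
  | zero => intro k hk; omega
  | succ s ih =>
    intro k hk
    rw [Nat.succ_mul] at hk
    rw [listPow]
    by_cases h : k < b.length
    · rw [List.getElem?_append_left h, getElem?_eq_bLett b hb h]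
    · rw [List.getElem?_append_right (by omega), ih _ (by omega),
        ← bLett_add_length b hb (k - b.length), Nat.sub_add_cancel (by omega)]

lemma bLett_rotate {Q : FinQuiver} (b : List (Letter Q)) (hb : b ≠ []) (r : ℕ)
    (hb' : b.rotate r ≠ []) (k : ℕ) : bLett (b.rotate r) hb' k = bLett b hb (r + k) := by
  have hn : 0 < b.length := List.length_pos_iff.mpr hb
  have h := getElem?_eq_bLett (b.rotate r) hb' (k := k % b.length)
    (by rw [List.length_rotate]; exact Nat.mod_lt _ hn)
  rw [List.getElem?_rotate (Nat.mod_lt _ hn), getElem?_eq_bLett b hb (Nat.mod_lt _ hn),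
    bLett_mod] at h
  have h1 : bLett (b.rotate r) hb' (k % b.length) = bLett (b.rotate r) hb' k := by
    have := bLett_mod (b.rotate r) hb' k
    rwa [List.length_rotate] at this
  rw [h1] at h
  rw [← Option.some.inj h, ← bLett_mod b hb (r + k), ← bLett_mod b hb (k % _ + r),
    Nat.mod_add_mod, Nat.add_comm]

/-- The letters of `b'^s β_1 ⋯ β_{n-1}`, where `b'` is the rotation of `b` by `r`. -/
lemma getElem?_family {Q : FinQuiver} (b : List (Letter Q)) (hb : b ≠ []) (r s k : ℕ)
    (hk : k < s * b.length + (b.length - 1)) :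
    (listPow (b.rotate r) s ++ (b.rotate r).take (b.length - 1))[k]? =
      some (bLett b hb (r + k)) := by
  have hb' : b.rotate r ≠ [] := by simpa using hb
  have hl : (b.rotate r).length = b.length := List.length_rotate ..
  rw [← bLett_rotate b hb r hb']
  by_cases h : k < s * b.length
  · rw [List.getElem?_append_left (by rwa [length_listPow, hl])]
    exact getElem?_listPow _ hb' s k (by rwa [hl])
  · rw [List.getElem?_append_right (by rw [length_listPow, hl]; omega), length_listPow, hl,
      List.getElem?_take_of_lt (by omega), getElem?_eq_bLett _ hb' (by omega)]
    congr 1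
    rw [← bLett_mod _ hb' k, ← bLett_mod _ hb' (k - _), hl]
    congr 1
    conv_rhs => rw [← Nat.sub_add_cancel (not_lt.mp h), Nat.add_mul_mod_self_right]

lemma WordComposable.getElem? {Q : FinQuiver} {w : List (Letter Q)} (hw : WordComposable w)
    {k : ℕ} {c d : Letter Q} (hc : w[k]? = some c) (hd : w[k + 1]? = some d) :
    ltgt c = lsrc d := by
  induction w generalizing k with
  | nil => simp at hc
  | cons e l ih =>
    cases l with
    | nil => simp at hd
    | cons f l =>
      cases k with
      | zero =>
        simp only [List.getElem?_cons_zero, List.getElem?_cons_succ, Option.some.injEq] at hc hd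
        subst hc hd; exact hw.1
      | succ k => exact ih hw.2 (by simpa using hc) (by simpa using hd)

lemma WordReduced.getElem? {Q : FinQuiver} {w : List (Letter Q)} (hw : WordReduced w)
    {k : ℕ} {c d : Letter Q} (hc : w[k]? = some c) (hd : w[k + 1]? = some d) :
    d ≠ linv c := by
  induction w generalizing k with
  | nil => simp at hc
  | cons e l ih =>
    cases l with
    | nil => simp at hd
    | cons f l =>
      cases k with
      | zero =>
        simp only [List.getElem?_cons_zero, List.getElem?_cons_succ, Option.some.injEq] at hc hd
        subst hc hd; exact hw.1
      | succ k => exact ih hw.2 (by simpa using hc) (by simpa using hd)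

lemma getElem?_listPow_add_two {Q : FinQuiver} (b : List (Letter Q)) (hb : b ≠ []) (k : ℕ) :
    (listPow b (k + 2))[k]? = some (bLett b hb k) ∧
      (listPow b (k + 2))[k + 1]? = some (bLett b hb (k + 1)) := by
  have hn : 0 < b.length := List.length_pos_iff.mpr hb
  have : k + 2 ≤ (k + 2) * b.length := Nat.le_mul_of_pos_right _ hn
  exact ⟨getElem?_listPow b hb _ _ (by omega), getElem?_listPow b hb _ _ (by omega)⟩

lemma ltgt_bLett {Q : FinQuiver} {D : BoundQuiver Q} {b : List (Letter Q)} (hb : IsBand D b)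
    (k : ℕ) : ltgt (bLett b hb.1 k) = bVtx b hb.1 (k + 1) :=
  have h := getElem?_listPow_add_two b hb.1 k
  (hb.2.1 (k + 2) (by omega)).comp.getElem? h.1 h.2

lemma bLett_succ_ne {Q : FinQuiver} {D : BoundQuiver Q} {b : List (Letter Q)} (hb : IsBand D b)
    (k : ℕ) : bLett b hb.1 (k + 1) ≠ linv (bLett b hb.1 k) :=
  have h := getElem?_listPow_add_two b hb.1 k
  (hb.2.1 (k + 2) (by omega)).red.getElem? h.1 h.2

/-- If the band visits distinct vertices, it uses no arrow in both directions: the two letters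
would have to be adjacent, which reducedness forbids. -/
lemma band_not_mixed {Q : FinQuiver} {D : BoundQuiver Q} {b : List (Letter Q)} (hb : IsBand D b)
    (hinj : ∀ p < b.length, ∀ q < b.length, bVtx b hb.1 p = bVtx b hb.1 q → p = q)
    (a : Q.A) (p q : ℕ) (hp : bLett b hb.1 p = Sum.inl a) :
    bLett b hb.1 q ≠ Sum.inr a := by
  intro hq
  have hn : 0 < b.length := List.length_pos_iff.mpr hb.1
  have h1 : bVtx b hb.1 p = bVtx b hb.1 (q + 1) := by
    rw [← ltgt_bLett hb q, ← lsrc_bLett, hp, hq]; rfl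
  have h2 : p % b.length = (q + 1) % b.length := by
    refine hinj _ (Nat.mod_lt _ hn) _ (Nat.mod_lt _ hn) ?_
    rw [← lsrc_bLett, ← lsrc_bLett, bLett_mod, bLett_mod]
    exact h1
  refine bLett_succ_ne hb q ?_
  rw [← bLett_mod, ← h2, bLett_mod, hp, hq]; rfl

/-! ### Semistability of the band module -/

/-- The span of the basis vectors at a set `S` of positions of the cyclic word closed under
the arrows, as a subrepresentation of `M(b,1,1)`. -/
noncomputable def bandSub (K : Type) [Field K] {Q : FinQuiver} (b : List (Letter Q))
    (hb : b ≠ []) (S : ℕ → Prop)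
    (hdir : ∀ l < b.length, ∀ a, bLett b hb l = Sum.inl a → S l → S ((l + 1) % b.length))
    (hinv : ∀ l < b.length, ∀ a, bLett b hb l = Sum.inr a → S ((l + 1) % b.length) → S l) :
    QSubRep (bandRep K Q b hb (1 : K) 1) where
  L i :=
    { carrier := {z : ({j : Fin b.length // bVtx b hb j = i} × Fin 1) → K |
        ∀ p, ¬ S p.1.1 → z p = 0}
      add_mem' := fun {z z'} hz hz' p hp => by
        change z p + z' p = 0
        rw [hz p hp, hz' p hp, add_zero]
      zero_mem' := fun _ _ => rfl
      smul_mem' := fun c z hz p hp => by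
        change c * z p = 0
        rw [hz p hp, mul_zero] }
  compat := by
    intro a z hz p hp
    change ∑ q : {j : Fin b.length // bVtx b hb j = Q.s a} × Fin 1,
      bandEntry K b hb 1 a p.1.1 q.1.1 p.2 q.2 * z q = 0
    refine Finset.sum_eq_zero fun q _ => ?_
    by_cases hq : S q.1.1
    · have h1 : ¬ (bLett b hb q.1.1 = Sum.inl a ∧
          ((q.1.1 : ℕ) + 1) % b.length = (p.1.1 : ℕ) % b.length) := by
        rintro ⟨h, h'⟩
        have := hdir _ q.1.1.2 a h hq
        rw [h', Nat.mod_eq_of_lt p.1.1.2] at this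
        exact hp this
      have h2 : ¬ (bLett b hb p.1.1 = Sum.inr a ∧
          ((p.1.1 : ℕ) + 1) % b.length = (q.1.1 : ℕ) % b.length) := by
        rintro ⟨h, h'⟩
        rw [Nat.mod_eq_of_lt q.1.1.2] at h'
        exact hp (hinv _ p.1.1.2 a h (h' ▸ hq))
      rw [bandEntry, if_neg h1, if_neg h2, add_zero, zero_mul]
    · rw [hz q hq, mul_zero]

lemma card_filter_prod_fin_one {α : Type} [Fintype α] (P : α → Prop)
    [DecidablePred P] :
    (Finset.univ.filter fun p : α × Fin 1 => P p.1).card = (Finset.univ.filter P).card := by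
  refine Finset.card_bij (fun p _ => p.1) ?_ ?_ ?_
  · intro p hp; simpa using hp
  · intro p _ q _ h; exact Prod.ext h (Subsingleton.elim _ _)
  · intro j hj; exact ⟨(j, 0), by simpa using hj, rfl⟩

lemma bandRep_dimVec (K : Type) [Field K] {Q : FinQuiver} (b : List (Letter Q))
    (hb : b ≠ []) (i : Q.V) :
    (bandRep K Q b hb (1 : K) 1).dimVec i =
      Fintype.card {j : Fin b.length // bVtx b hb j = i} := by
  refine (Module.finrank_fintype_fun_eq_card K).trans ?_
  simp

lemma band_sum_eq_zero {K : Type} [Field K] {Q : FinQuiver} {b : List (Letter Q)}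
    {hb : b ≠ []} {x : Q.V → ℝ} (hx : IsSemistable (bandRep K Q b hb (1 : K) 1) x) :
    ∑ l ∈ Finset.range b.length, x (bVtx b hb l) = 0 := by
  have h := hx.1
  have h1 : ∀ i, (bandRep K Q b hb (1 : K) 1).dimVec i = (Finset.univ.filter
      fun p : {j : Fin b.length // bVtx b hb j = i} => True).card := by
    intro i
    rw [bandRep_dimVec]; simp
  simp only [stabInner, h1] at h
  rw [Finset.sum_range, ← h]
  refine Eq.symm ((sum_mul_card_fiber (fun j : Fin b.length => bVtx b hb j) x
    (fun _ => True)).trans ?_)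
  simp

lemma band_sum_closed_nonpos {K : Type} [Field K] {Q : FinQuiver} {b : List (Letter Q)}
    {hb : b ≠ []} {x : Q.V → ℝ} (hx : IsSemistable (bandRep K Q b hb (1 : K) 1) x)
    (S : ℕ → Prop) [DecidablePred S]
    (hdir : ∀ l < b.length, ∀ a, bLett b hb l = Sum.inl a → S l → S ((l + 1) % b.length))
    (hinv : ∀ l < b.length, ∀ a, bLett b hb l = Sum.inr a → S ((l + 1) % b.length) → S l) :
    ∑ l ∈ Finset.range b.length, (if S l then x (bVtx b hb l) else 0) ≤ 0 := by
  have h := hx.2 (bandSub K b hb S hdir hinv)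
  have h1 : ∀ i, Module.finrank K ((bandSub K b hb S hdir hinv).L i) = (Finset.univ.filter
      fun p : {j : Fin b.length // bVtx b hb j = i} => S p.1).card := by
    intro i
    refine (finrank_eq_card_pivots (K := K)
      (f := fun p : {j : Fin b.length // bVtx b hb j = i} × Fin 1 => (p.1.1 : ℕ))
      (fun p q h => Prod.ext (Subtype.ext (Fin.ext h)) (Subsingleton.elim _ _))
      ((bandSub K b hb S hdir hinv).L i)).trans ?_
    refine Eq.trans ?_ (card_filter_prod_fin_one
      (fun p : {j : Fin b.length // bVtx b hb j = i} => S p.1))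
    refine congrArg Finset.card (Finset.filter_congr fun p _ => ?_)
    constructor
    · rintro ⟨z, hz, hzp, -⟩
      by_contra hp
      exact hzp (hz p hp)
    · intro hp
      refine ⟨Pi.single p 1, ?_, by simp, ?_⟩
      · intro q hq
        refine Pi.single_eq_of_ne (fun h => hq ?_) _
        rw [h]; exact hp
      · intro q hq
        refine Pi.single_eq_of_ne (fun h => ?_) _
        rw [h] at hq
        exact lt_irrefl _ hq
  simp only [stabInner, h1] at h
  rw [Finset.sum_range]
  refine le_of_eq_of_le (Eq.symm ?_) h
  exact sum_mul_card_fiber (fun j : Fin b.length => bVtx b hb j) x (fun j => S j)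

lemma sum_range_ite_lt (n q : ℕ) (hq : q ≤ n) (z : ℕ → ℝ) :
    ∑ l ∈ Finset.range n, (if l < q then z l else 0) = ∑ l ∈ Finset.range q, z l := by
  rw [← Finset.sum_filter]
  congr 1
  ext l
  simp only [Finset.mem_filter, Finset.mem_range]
  omega

/-- The arc from just after a direct letter `i` to an inverse letter `j` spans a
subrepresentation, so semistability compares the partial sums at the two letters. -/
lemma band_partial_sum_le {K : Type} [Field K] {Q : FinQuiver} {b : List (Letter Q)}
    {hb : b ≠ []} {x : Q.V → ℝ} (hx : IsSemistable (bandRep K Q b hb (1 : K) 1) x)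
    {i j : ℕ} (hi : i < b.length) (hj : j < b.length) {a a' : Q.A}
    (hia : bLett b hb i = Sum.inl a) (hja : bLett b hb j = Sum.inr a') :
    ∑ l ∈ Finset.range (j + 1), x (bVtx b hb l) ≤ ∑ l ∈ Finset.range (i + 1), x (bVtx b hb l) := by
  have h0 := band_sum_eq_zero hx
  have hij : i ≠ j := by rintro rfl; simp [hia] at hja
  have hmod : ∀ l < b.length, (l + 1 < b.length ∧ (l + 1) % b.length = l + 1) ∨
      (l + 1 = b.length ∧ (l + 1) % b.length = 0) := by
    intro l hl
    rcases Nat.lt_or_eq_of_le (Nat.succ_le_of_lt hl) with h | h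
    · exact Or.inl ⟨h, Nat.mod_eq_of_lt h⟩
    · exact Or.inr ⟨h, by rw [show l + 1 = b.length from h]; exact Nat.mod_self _⟩
  set S : ℕ → Prop := fun l => if i < j then i < l ∧ l ≤ j else l ≤ j ∨ i < l with hS
  have h := band_sum_closed_nonpos hx S
    (by
      intro l hl c hc hSl
      have : l ≠ j := by rintro rfl; simp [hc] at hja
      rcases hmod l hl with ⟨h1, h2⟩ | ⟨h1, h2⟩ <;> rw [h2] <;> simp only [hS] at hSl ⊢ <;>
        split_ifs at hSl ⊢ <;> omega)
    (by
      intro l hl c hc hSl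
      have : l ≠ i := by rintro rfl; simp [hc] at hia
      rcases hmod l hl with ⟨h1, h2⟩ | ⟨h1, h2⟩ <;> rw [h2] at hSl <;>
        simp only [hS] at hSl ⊢ <;> split_ifs at hSl ⊢ <;> omega)
  rw [← sum_range_ite_lt b.length (j + 1) hj, ← sum_range_ite_lt b.length (i + 1) hi]
  have h2 : ∑ l ∈ Finset.range b.length, (if S l then x (bVtx b hb l) else 0) =
      ∑ l ∈ Finset.range b.length, (if l < j + 1 then x (bVtx b hb l) else 0) -
      ∑ l ∈ Finset.range b.length, (if l < i + 1 then x (bVtx b hb l) else 0) +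
      (if i < j then 0 else ∑ l ∈ Finset.range b.length, x (bVtx b hb l)) := by
    rw [← Finset.sum_sub_distrib]
    by_cases hlt : i < j
    · rw [if_pos hlt, add_zero]
      refine Finset.sum_congr rfl fun l _ => ?_
      have : S l ↔ i < l ∧ l ≤ j := by simp [hS, hlt]
      by_cases h1 : l < j + 1 <;> by_cases h2 : l < i + 1 <;>
        simp only [this, h1, h2, if_true, if_false]
      · rw [if_neg (by omega)]; ring
      · rw [if_pos (by omega)]; ring
      · omega
      · rw [if_neg (by omega)]; ring
    · rw [if_neg hlt, ← Finset.sum_add_distrib]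
      refine Finset.sum_congr rfl fun l _ => ?_
      have : S l ↔ l ≤ j ∨ i < l := by simp [hS, hlt]
      by_cases h1 : l < j + 1 <;> by_cases h2 : l < i + 1 <;>
        simp only [this, h1, h2, if_true, if_false]
      · rw [if_pos (by omega)]; ring
      · omega
      · rw [if_neg (by omega)]; ring
      · rw [if_pos (by omega)]; ring
  rw [h2, h0] at h
  simp only [ite_self, add_zero] at h
  linarith

/-- There is a letter at which the flow with partial sums `F` can be normalized to vanish: the
least value of `F` on direct letters if there are any, the greatest value of `F` otherwise. -/
lemma exists_cut_letter {K : Type} [Field K] {Q : FinQuiver} {b : List (Letter Q)}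
    {hb : b ≠ []} {x : Q.V → ℝ} (hx : IsSemistable (bandRep K Q b hb (1 : K) 1) x) :
    ∃ i < b.length, ∀ j < b.length,
      (∀ a, bLett b hb j = Sum.inl a →
        ∑ l ∈ Finset.range (i + 1), x (bVtx b hb l) ≤
          ∑ l ∈ Finset.range (j + 1), x (bVtx b hb l)) ∧
      (∀ a, bLett b hb j = Sum.inr a →
        ∑ l ∈ Finset.range (j + 1), x (bVtx b hb l) ≤
          ∑ l ∈ Finset.range (i + 1), x (bVtx b hb l)) := by
  set F : ℕ → ℝ := fun i => ∑ l ∈ Finset.range (i + 1), x (bVtx b hb l) with hF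
  have hn : 0 < b.length := List.length_pos_iff.mpr hb
  by_cases hd : ∃ i < b.length, ∃ a, bLett b hb i = Sum.inl a
  · obtain ⟨i, hi, hmin⟩ := Finset.exists_min_image
      ((Finset.range b.length).filter fun i => ∃ a, bLett b hb i = Sum.inl a) F
      (by
        obtain ⟨i, hi, ha⟩ := hd
        exact ⟨i, by simpa using ⟨hi, ha⟩⟩)
    simp only [Finset.mem_filter, Finset.mem_range] at hi hmin
    obtain ⟨hi, a, ha⟩ := hi
    exact ⟨i, hi, fun j hj => ⟨fun a' ha' => hmin j ⟨hj, a', ha'⟩,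
      fun a' ha' => band_partial_sum_le hx hi hj ha ha'⟩⟩
  · obtain ⟨i, hi, hmax⟩ := Finset.exists_max_image (Finset.range b.length) F
      ⟨0, by simpa using hn⟩
    exact ⟨i, by simpa using hi, fun j hj =>
      ⟨fun a ha => absurd ⟨j, hj, a, ha⟩ hd, fun a _ => hmax j (by simpa using hj)⟩⟩

/-- Thinness of `M(b,1,1)` means that `b` visits pairwise distinct vertices. -/
lemma bVtx_inj_of_thin {K : Type} [Field K] {Q : FinQuiver} {b : List (Letter Q)} {hb : b ≠ []}
    (hthin : ∀ i, Module.finrank K ((bandRep K Q b hb (1 : K) 1).M i) ≤ 1) :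
    ∀ p < b.length, ∀ q < b.length, bVtx b hb p = bVtx b hb q → p = q := by
  intro p hp q hq h
  have h1 := (bandRep_dimVec K b hb (bVtx b hb q)).symm.trans_le (hthin _)
  have := Fintype.card_le_one_iff.mp h1 ⟨⟨p, hp⟩, h⟩ ⟨⟨q, hq⟩, rfl⟩
  simpa using this

/-! ### The point lies in every stability space of the family -/

/-- If `b'` is obtained from `b` by cutting after a letter `i` at which the flow vanishes, then
`x` itself lies in the supported stability space of every `M(b'^s β_1 ⋯ β_{n-1})`. -/
lemma mem_Dsupp_stringRep {K : Type} [Field K] {Q : FinQuiver} {D : BoundQuiver Q}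
    {b : List (Letter Q)} (hb : IsBand D b)
    (hthin : ∀ i, Module.finrank K ((bandRep K Q b hb.1 (1 : K) 1).M i) ≤ 1)
    {x : Q.V → ℝ} (hx : x ∈ Dsupp (bandRep K Q b hb.1 (1 : K) 1))
    {i : ℕ} (hi : i < b.length)
    (hcut : ∀ j < b.length,
      (∀ a, bLett b hb.1 j = Sum.inl a →
        ∑ l ∈ Finset.range (i + 1), x (bVtx b hb.1 l) ≤
          ∑ l ∈ Finset.range (j + 1), x (bVtx b hb.1 l)) ∧
      (∀ a, bLett b hb.1 j = Sum.inr a →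
        ∑ l ∈ Finset.range (j + 1), x (bVtx b hb.1 l) ≤
          ∑ l ∈ Finset.range (i + 1), x (bVtx b hb.1 l)))
    (s : ℕ) (w : List (Letter Q))
    (hwdef : w = listPow (b.rotate (i + 1)) s ++ (b.rotate (i + 1)).take (b.length - 1))
    (hw : w ≠ []) : x ∈ Dsupp (stringRep K Q w hw) := by
  have hn : 0 < b.length := List.length_pos_iff.mpr hb.1
  have hlen : w.length = s * b.length + (b.length - 1) := by
    rw [hwdef, List.length_append, length_listPow, List.length_take, List.length_rotate]
    omega
  have hget : ∀ k < w.length, w[k]? = some (bLett b hb.1 (i + 1 + k)) := by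
    intro k hk
    rw [hlen] at hk
    rw [hwdef]
    exact getElem?_family b hb.1 (i + 1) s k hk
  have hget' : ∀ k c, w[k]? = some c → k < w.length ∧ c = bLett b hb.1 (i + 1 + k) := by
    intro k c hc
    have hk : k < w.length := (List.getElem?_eq_some_iff.mp hc).1
    exact ⟨hk, Option.some.inj (hc.symm.trans (hget k hk))⟩
  set v : ℕ → Q.V := fun k => bVtx b hb.1 (i + 1 + k) with hv
  have hvtx : ∀ k ≤ w.length, wVtx w hw k = v k := by
    intro k hk
    have hw0 : 0 < w.length := List.length_pos_iff.mpr hw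
    rcases k with _ | k
    · have h := hget 0 hw0
      rw [List.getElem?_eq_getElem hw0] at h
      rw [wVtx, if_pos rfl, List.head_eq_getElem, Option.some.inj h]
      rfl
    · have h := hget k hk
      simp only [wVtx, Nat.succ_ne_zero, if_false, Nat.add_sub_cancel, List.getD_eq_getElem?_getD,
        h, Option.getD_some]
      exact ltgt_bLett hb _
  -- The partial sums of `x` along the band are periodic, the total over one turn being zero.
  set F : ℕ → ℝ := fun k => ∑ l ∈ Finset.range k, x (bVtx b hb.1 l) with hF
  have hF0 : F b.length = 0 := band_sum_eq_zero hx.1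
  have hFper : Function.Periodic F b.length := by
    intro k
    change ∑ l ∈ Finset.range (k + b.length), x (bVtx b hb.1 l) = _
    rw [Nat.add_comm, Finset.sum_range_add]
    have h1 : ∑ l ∈ Finset.range b.length, x (bVtx b hb.1 l) = 0 := hF0
    rw [h1, zero_add]
    exact Finset.sum_congr rfl fun l _ => by rw [Nat.add_comm, bVtx_add_length]
  have hsum : ∀ k, ∑ l ∈ Finset.range k, x (v l) = F (i + 1 + k) - F (i + 1) := by
    intro k
    simp only [hF, hv, Finset.sum_range_add]
    ring
  have hFsucc : ∀ k, F (k % b.length + 1) = F (k + 1) := by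
    intro k
    rw [← hFper.map_mod_nat (k + 1), ← hFper.map_mod_nat (k % b.length + 1), Nat.mod_add_mod]
  have hmix : ∀ a, Sum.inl a ∈ w → Sum.inr a ∉ w := by
    intro a h1 h2
    obtain ⟨p, hp⟩ := List.mem_iff_getElem?.mp h1
    obtain ⟨q, hq⟩ := List.mem_iff_getElem?.mp h2
    exact band_not_mixed hb (bVtx_inj_of_thin hthin) a _ _ (hget' p _ hp).2.symm
      (hget' q _ hq).2.symm
  refine ⟨?_, ?_⟩
  · refine stringRep_semistable hmix v hvtx ?_ x ?_ ?_ ?_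
    · intro k c hc
      rw [(hget' k c hc).2]
      exact ⟨rfl, ltgt_bLett hb _⟩
    · intro k a hc
      have h := (hcut _ (Nat.mod_lt (i + 1 + k) hn)).1 a
        ((bLett_mod ..).trans (hget' k _ hc).2.symm)
      rw [hsum]
      have h' : F (i + 1) ≤ F ((i + 1 + k) % b.length + 1) := h
      rw [hFsucc] at h'
      exact sub_nonneg.mpr h'
    · intro k a hc
      have h := (hcut _ (Nat.mod_lt (i + 1 + k) hn)).2 a
        ((bLett_mod ..).trans (hget' k _ hc).2.symm)
      rw [hsum]
      have h' : F ((i + 1 + k) % b.length + 1) ≤ F (i + 1) := h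
      rw [hFsucc] at h'
      exact sub_nonpos.mpr h'
    · rw [hsum, hlen, show s * b.length + (b.length - 1) + 1 = (s + 1) * b.length by
        rw [Nat.succ_mul]; omega]
      have h := hFper.nsmul (s + 1) (i + 1)
      rw [smul_eq_mul] at h
      rw [h, sub_self]
  · intro u hu
    refine hx.2 u fun hu' => hu ?_
    -- The string makes at least one full turn minus a letter, hence visits every vertex of `b`.
    have h1 : 0 < Fintype.card {j : Fin b.length // bVtx b hb.1 j = u} := by
      rw [← bandRep_dimVec K]; exact Nat.pos_of_ne_zero hu'
    obtain ⟨⟨j, hj⟩, hju⟩ := Fintype.card_pos_iff.mp h1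
    obtain ⟨k, hk, hku⟩ : ∃ k ≤ w.length, wVtx w hw k = u := by
      have hk : ∃ k < b.length, v k = u := by
        by_cases h : i + 1 ≤ j
        · refine ⟨j - (i + 1), by omega, ?_⟩
          rw [← hju]
          simp only [hv, Nat.add_sub_cancel' h]
        · refine ⟨j + b.length - (i + 1), by omega, ?_⟩
          rw [← hju]
          simp only [hv]
          rw [Nat.add_sub_cancel' (by omega), bVtx_add_length]
      obtain ⟨k, hk, h⟩ := hk
      exact ⟨k, by omega, (hvtx k (by omega)).trans h⟩
    have h2 : Module.finrank K ((stringRep K Q w hw).M u) =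
        Fintype.card {j : Fin (w.length + 1) // wVtx w hw j = u} :=
      Module.finrank_fintype_fun_eq_card K
    change Module.finrank K ((stringRep K Q w hw).M u) ≠ 0
    rw [h2]
    exact Nat.ne_of_gt (Fintype.card_pos_iff.mpr ⟨⟨⟨k, by omega⟩, hku⟩⟩)

/-- For a band `b` with `M(b,1,1)` thin, every point `x` of the supported
stability space of `M(b,1,1)` is approximated by the supported stability spaces of the
family of string modules `M(b'^s w)`, for some rotation `b'` of `b` and initial segment
`w` of `b'`: for every `ε > 0` there is `r_ε` such that for all `s ≥ r_ε` the open ball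
`B(x, ε)` meets `D_supp(M(b'^s w))`. -/
theorem band_stability_space_approximated_by_strings_thin
    (K : Type) [Field K] [IsAlgClosed K] (Q : FinQuiver) (D : BoundQuiver Q)
    (hsb : SpecialBiserial D) (b : List (Letter Q)) (hb : IsBand D b)
    (hthin : ∀ i, Module.finrank K ((bandRep K Q b hb.1 (1 : K) 1).M i) ≤ 1)
    (x : Q.V → ℝ) (hx : x ∈ Dsupp (bandRep K Q b hb.1 (1 : K) 1)) :
    ∃ (b' : List (Letter Q)) (m : ℕ), List.IsRotated b b' ∧ m < b'.length ∧
      ∀ ε : ℝ, 0 < ε → ∃ rε : ℕ, ∀ s : ℕ, rε ≤ s →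
        ∀ hne : listPow b' s ++ b'.take m ≠ [],
          ∃ y ∈ Dsupp (stringRep K Q (listPow b' s ++ b'.take m) hne), dist y x < ε := by
  -- Take `y = x`, cutting `b` after a letter at which the flow of `x` vanishes.
  obtain ⟨i, hi, hcut⟩ := exists_cut_letter hx.1
  have hn : 0 < b.length := List.length_pos_iff.mpr hb.1
  have hl : (b.rotate (i + 1)).length = b.length := List.length_rotate ..
  refine ⟨b.rotate (i + 1), b.length - 1, ⟨i + 1, rfl⟩, by omega, fun ε hε =>
    ⟨0, fun s _ hne => ⟨x, ?_, by simpa using hε⟩⟩⟩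
  exact mem_Dsupp_stringRep hb hthin hx hi hcut s _ rfl hne
end
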